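/- arXiv:1804.02227 — 3 statements merged into one kernel-verified Lean document; each statement's English description precedes it below -/
import Mathlib

section
/- Let 1 < p < ∞ and p−2 < α ≤ p−1, and let f(z) = ∑_{n=0}^∞ a_n z^n be analytic in the unit disc 𝔻, where {a_n} is a decreasing sequence of non-negative real numbers. Then f belongs to the Dirichlet-type space 𝒟^p_α if and only if ∑_{n=0}^∞ (n+1)^{2p−α−3} a_n^p < ∞. -/
open MeasureTheory Set Metric Filter Asymptotics
open scoped ENNReal

/-- Normalized area measure on `ℂ`: Lebesgue area divided by `π`,
so that the unit disc has total mass `1`. -/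
noncomputable def dA : Measure ℂ := (ENNReal.ofReal Real.pi)⁻¹ • volume

/-- The (weighted) Bergman norm `‖f‖_{A^p_α} = ((α+1) ∫_𝔻 (1-|z|²)^α |f(z)|^p dA)^{1/p}`,
as an extended real number. -/
noncomputable def bergmanNorm (p α : ℝ) (f : ℂ → ℂ) : ℝ≥0∞ :=
  (ENNReal.ofReal (α + 1) *
    ∫⁻ z in ball (0 : ℂ) 1, ENNReal.ofReal ((1 - ‖z‖ ^ 2) ^ α * ‖f z‖ ^ p) ∂dA) ^ (1 / p)

/-- The Dirichlet-type norm `‖f‖_{𝒟^p_α} = |f(0)| + ‖f′‖_{A^p_α}`. -/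
noncomputable def dirichletNorm (p α : ℝ) (f : ℂ → ℂ) : ℝ≥0∞ :=
  ENNReal.ofReal ‖f 0‖ + bergmanNorm p α (deriv f)

/-- The Hardy `H^1` norm `sup_{0 ≤ r < 1} (2π)⁻¹ ∫_0^{2π} |f(re^{iθ})| dθ`. -/
noncomputable def hardyNorm (f : ℂ → ℂ) : ℝ≥0∞ :=
  ⨆ r ∈ Ico (0 : ℝ) 1,
    (ENNReal.ofReal (2 * Real.pi))⁻¹ *
      ∫⁻ θ in Ioc (0 : ℝ) (2 * Real.pi),
        ENNReal.ofReal ‖f ((r : ℂ) * Complex.exp ((θ : ℂ) * Complex.I))‖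

/-- The operator `I_μ f(z) = ∫_{[0,1)} f(t)/(1-tz) dμ(t)`. -/
noncomputable def Imu (μ : Measure ℝ) (f : ℂ → ℂ) (z : ℂ) : ℂ :=
  ∫ t : ℝ, f (t : ℂ) / (1 - (t : ℂ) * z) ∂μ

/-- The moment of order `n` of `μ`. -/
noncomputable def moment (μ : Measure ℝ) (n : ℕ) : ℝ := ∫ t : ℝ, t ^ n ∂μ

/-- `M_∞(r, f) = sup_{|z| = r} |f(z)|`. -/
noncomputable def Minf (f : ℂ → ℂ) (r : ℝ) : ℝ := ⨆ z ∈ sphere (0 : ℂ) r, ‖f z‖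

/-!
For sufficiency, put `δ = |1 - z|`. Summing by parts from the index `N ≈ 1 / δ` on gives
`|∑ (n + 1) aₙ zⁿ| ≲ ∑ aₙ |z|ⁿ / (1 / (n + 1) + δ)`. For `z = (1 - t) e^{iθ}` one has `|θ| ≲ δ` and
`|z|ⁿ ≲ e^{-(n + 1) t}`, so for each fixed `θ` the right-hand side is dominated by a power series
in `e⁻ᵗ` with nonnegative coefficients. The Hardy–Littlewood inequality
`∫ t^α (∑ bₙ e^{-(n + 1) t})^p dt ≲ ∑ (n + 1)^{p - 2 - α} bₙ^p`, valid for every `α > -1`, and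
`∫ (1 / (n + 1) + |θ|)^{-p} dθ ≈ (n + 1)^{p - 1}` then produce the exponent `2p - α - 3`.

For necessity, the partial sum up to `N` already gives `∑ (n + 1) aₙ xⁿ ≳ N² a_N` at
`x = 1 - 1 / (2N)`. Subharmonicity of the `p`-th power of the modulus on the disjoint discs of
radius `2^{-k} / 8` about `1 - 2^{-k} / 2` turns this into a bound for
`∑ₖ 2^{k (2p - α - 2)} a_{2ᵏ}^p`, and Cauchy condensation concludes.
-/

section HardyLittlewood

theorem lintegral_rpow_mul_exp_neg_mul_Ioi {γ s : ℝ} (hγ : 0 < γ) (hs : 0 < s) :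
    ∫⁻ t in Ioi (0 : ℝ), ENNReal.ofReal (t ^ (γ - 1) * Real.exp (-(s * t))) =
      ENNReal.ofReal (Real.Gamma γ * s ^ (-γ)) := by
  have := Real.Gamma_pos_of_pos hγ
  have hvalue : ∫ t in Ioi (0 : ℝ), t ^ (γ - 1) * Real.exp (-(s * t)) =
      Real.Gamma γ * s ^ (-γ) := by
    rw [Real.integral_rpow_mul_exp_neg_mul_Ioi hγ hs, one_div, Real.inv_rpow hs.le,
      Real.rpow_neg hs.le, mul_comm]
  have hint : IntegrableOn (fun t : ℝ => t ^ (γ - 1) * Real.exp (-(s * t))) (Ioi 0) :=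
    Integrable.of_integral_ne_zero (by rw [hvalue]; positivity)
  rw [← hvalue, ofReal_integral_eq_lintegral_ofReal hint]
  filter_upwards [ae_restrict_mem measurableSet_Ioi] with t (ht : 0 < t)
  positivity

theorem tsum_add_one_le_lintegral_of_antitoneOn {f : ℝ → ℝ≥0∞} (hf : AntitoneOn f (Ioi 0)) :
    ∑' n : ℕ, f (n + 1) ≤ ∫⁻ x in Ioi (0 : ℝ), f x := by
  have hpos (n : ℕ) {x : ℝ} (hx : x ∈ Ioc (n : ℝ) (n + 1)) : x ∈ Ioi (0 : ℝ) :=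
    n.cast_nonneg.trans_lt hx.1
  have hdisj : Pairwise (Function.onFun Disjoint fun n : ℕ => Ioc (n : ℝ) (n + 1)) := by
    simpa using (Nat.mono_cast (α := ℝ)).pairwise_disjoint_on_Ioc_succ
  calc ∑' n : ℕ, f (n + 1)
      = ∑' n : ℕ, ∫⁻ _ in Ioc (n : ℝ) (n + 1), f (n + 1) := by simp
    _ ≤ ∑' n : ℕ, ∫⁻ x in Ioc (n : ℝ) (n + 1), f x :=
        ENNReal.tsum_le_tsum fun n => setLIntegral_mono' measurableSet_Ioc fun x hx =>
          hf (hpos n hx) (mem_Ioi.2 n.cast_add_one_pos) hx.2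
    _ = ∫⁻ x in ⋃ n : ℕ, Ioc (n : ℝ) (n + 1), f x :=
        (lintegral_iUnion (fun _ => measurableSet_Ioc) hdisj f).symm
    _ ≤ ∫⁻ x in Ioi (0 : ℝ), f x := lintegral_mono_set (iUnion_subset fun n _ hx => hpos n hx)

theorem tsum_mul_rpow_le {ι : Type*} {p : ℝ} (hp : 1 ≤ p) (w f : ι → ℝ≥0∞) :
    (∑' i, w i * f i) ^ p ≤ (∑' i, w i) ^ (p - 1) * ∑' i, w i * f i ^ p := by
  have hp0 : 0 < p := one_pos.trans_le hp
  have hp1 : 0 ≤ 1 - p⁻¹ := sub_nonneg.2 (inv_le_one_of_one_le₀ hp)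
  have holder : ∑' i, w i * f i ≤ (∑' i, w i) ^ (1 - p⁻¹) * (∑' i, w i * f i ^ p) ^ p⁻¹ := by
    rw [ENNReal.tsum_eq_iSup_sum]
    refine iSup_le fun s => (ENNReal.inner_le_weight_mul_Lp_of_nonneg s hp w f).trans ?_
    gcongr <;> exact ENNReal.sum_le_tsum s
  calc (∑' i, w i * f i) ^ p
      ≤ ((∑' i, w i) ^ (1 - p⁻¹) * (∑' i, w i * f i ^ p) ^ p⁻¹) ^ p := by gcongr
    _ = (∑' i, w i) ^ (p - 1) * ∑' i, w i * f i ^ p := by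
        rw [ENNReal.mul_rpow_of_nonneg _ _ hp0.le, ← ENNReal.rpow_mul, ← ENNReal.rpow_mul,
          inv_mul_cancel₀ hp0.ne', ENNReal.rpow_one, sub_mul, inv_mul_cancel₀ hp0.ne', one_mul]

/-- The power series `∑ bₙ xⁿ⁺¹` at `x = e⁻ᵗ`, with values in `[0, ∞]`. In the variable `t` its
weighted integrals are Gamma integrals. -/
noncomputable def expSum (b : ℕ → ℝ≥0∞) (t : ℝ) : ℝ≥0∞ :=
  ∑' n : ℕ, b n * ENNReal.ofReal (Real.exp (-((n + 1) * t)))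

theorem measurable_expSum_comp {Ω : Type*} [MeasurableSpace Ω] {b : ℕ → Ω → ℝ≥0∞} {t : Ω → ℝ}
    (hb : ∀ n, Measurable (b n)) (ht : Measurable t) :
    Measurable fun ω => expSum (fun n => b n ω) (t ω) :=
  Measurable.tsum fun n => (hb n).mul (by fun_prop)

@[fun_prop]
theorem measurable_expSum (b : ℕ → ℝ≥0∞) : Measurable (expSum b) :=
  measurable_expSum_comp (fun _ => measurable_const) measurable_id

theorem lintegral_rpow_mul_expSum {γ : ℝ} (hγ : 0 < γ) (b : ℕ → ℝ≥0∞) :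
    ∫⁻ t in Ioi (0 : ℝ), ENNReal.ofReal (t ^ (γ - 1)) * expSum b t =
      ENNReal.ofReal (Real.Gamma γ) * ∑' n : ℕ, b n * ENNReal.ofReal (((n : ℝ) + 1) ^ (-γ)) := by
  have hΓ := Real.Gamma_pos_of_pos hγ
  calc ∫⁻ t in Ioi (0 : ℝ), ENNReal.ofReal (t ^ (γ - 1)) * expSum b t
      = ∫⁻ t in Ioi (0 : ℝ), ∑' n : ℕ,
          b n * ENNReal.ofReal (t ^ (γ - 1) * Real.exp (-((n + 1) * t))) := by
        refine setLIntegral_congr_fun measurableSet_Ioi fun t (ht : 0 < t) => ?_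
        simp only [expSum, ← ENNReal.tsum_mul_left, ENNReal.ofReal_mul (Real.rpow_nonneg ht.le _),
          mul_left_comm]
    _ = ∑' n : ℕ, b n * ENNReal.ofReal (Real.Gamma γ * ((n : ℝ) + 1) ^ (-γ)) := by
        rw [lintegral_tsum fun n => by fun_prop]
        refine tsum_congr fun n => ?_
        rw [lintegral_const_mul _ (by fun_prop),
          lintegral_rpow_mul_exp_neg_mul_Ioi hγ n.cast_add_one_pos]
    _ = _ := by
        simp only [← ENNReal.tsum_mul_left, ENNReal.ofReal_mul hΓ.le, mul_left_comm]

theorem expSum_rpow_neg_le {c t : ℝ} (hc0 : 0 ≤ c) (hc1 : c < 1) (ht : 0 < t) :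
    expSum (fun n => ENNReal.ofReal (((n : ℝ) + 1) ^ (-c))) t ≤
      ENNReal.ofReal (Real.Gamma (1 - c) * t ^ (c - 1)) := by
  have hanti : AntitoneOn (fun x : ℝ => ENNReal.ofReal (x ^ (-c) * Real.exp (-(t * x))))
      (Ioi 0) := by
    intro x (hx : 0 < x) y _ hxy
    refine ENNReal.ofReal_le_ofReal (mul_le_mul ?_ ?_ (by positivity) (by positivity))
    · exact Real.rpow_le_rpow_of_nonpos hx hxy (neg_nonpos.2 hc0)
    · gcongr
  calc expSum (fun n => ENNReal.ofReal (((n : ℝ) + 1) ^ (-c))) t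
      = ∑' n : ℕ, ENNReal.ofReal (((n : ℝ) + 1) ^ (-c) * Real.exp (-(t * (n + 1)))) :=
        tsum_congr fun n => by rw [← ENNReal.ofReal_mul (by positivity), mul_comm t]
    _ ≤ ∫⁻ x in Ioi (0 : ℝ), ENNReal.ofReal (x ^ (-c) * Real.exp (-(t * x))) :=
        tsum_add_one_le_lintegral_of_antitoneOn hanti
    _ = ENNReal.ofReal (Real.Gamma (1 - c) * t ^ (c - 1)) := by
        simpa only [sub_sub_cancel_left, neg_sub]
          using lintegral_rpow_mul_exp_neg_mul_Ioi (sub_pos.2 hc1) ht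

theorem expSum_mul_rpow_le {p : ℝ} (hp : 1 ≤ p) (w u : ℕ → ℝ≥0∞) (t : ℝ) :
    expSum (fun n => w n * u n) t ^ p ≤
      expSum w t ^ (p - 1) * expSum (fun n => w n * u n ^ p) t := by
  simpa only [expSum, mul_right_comm] using
    tsum_mul_rpow_le hp (fun n => w n * ENNReal.ofReal (Real.exp (-((n + 1) * t)))) u

theorem expSum_rpow_le {p c t : ℝ} (hp : 1 ≤ p) (hc0 : 0 ≤ c) (hc1 : c < 1) (ht : 0 < t)
    (b : ℕ → ℝ≥0∞) :
    expSum b t ^ p ≤ ENNReal.ofReal (Real.Gamma (1 - c) ^ (p - 1) * t ^ ((c - 1) * (p - 1))) *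
      expSum (fun n => b n ^ p * ENNReal.ofReal (((n : ℝ) + 1) ^ (c * (p - 1)))) t := by
  have hp0 : 0 ≤ p := zero_le_one.trans hp
  have hp1 : 0 ≤ p - 1 := sub_nonneg.2 hp
  have := Real.Gamma_pos_of_pos (sub_pos.2 hc1)
  set w : ℕ → ℝ≥0∞ := fun n => ENNReal.ofReal (((n : ℝ) + 1) ^ (-c)) with hw
  set u : ℕ → ℝ≥0∞ := fun n => b n * ENNReal.ofReal (((n : ℝ) + 1) ^ c) with hu
  have hwu : (fun n => w n * u n) = b := by
    funext n
    rw [hw, hu, mul_left_comm, ← ENNReal.ofReal_mul (by positivity),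
      ← Real.rpow_add (by positivity), neg_add_cancel, Real.rpow_zero, ENNReal.ofReal_one, mul_one]
  have hwup : (fun n => w n * u n ^ p) =
      fun n => b n ^ p * ENNReal.ofReal (((n : ℝ) + 1) ^ (c * (p - 1))) := by
    funext n
    rw [hw, hu, ENNReal.mul_rpow_of_nonneg _ _ hp0, mul_left_comm,
      ENNReal.ofReal_rpow_of_nonneg (by positivity) hp0, ← ENNReal.ofReal_mul (by positivity),
      ← Real.rpow_mul (by positivity), ← Real.rpow_add (by positivity)]
    ring_nf
  calc expSum b t ^ p ≤ expSum w t ^ (p - 1) * expSum (fun n => w n * u n ^ p) t := by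
        simpa only [hwu] using expSum_mul_rpow_le hp w u t
    _ ≤ ENNReal.ofReal (Real.Gamma (1 - c) * t ^ (c - 1)) ^ (p - 1) *
          expSum (fun n => w n * u n ^ p) t := by
        gcongr
        exact expSum_rpow_neg_le hc0 hc1 ht
    _ = _ := by
        rw [ENNReal.ofReal_rpow_of_nonneg (by positivity) hp1,
          Real.mul_rpow (by positivity) (by positivity), ← Real.rpow_mul ht.le, hwup]

theorem exists_lintegral_rpow_mul_expSum_rpow_le {p β : ℝ} (hp : 1 < p) (hβ : -1 < β) :
    ∃ C : ℝ≥0∞, C ≠ ⊤ ∧ ∀ b : ℕ → ℝ≥0∞,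
      ∫⁻ t in Ioi (0 : ℝ), ENNReal.ofReal (t ^ β) * expSum b t ^ p ≤
        C * ∑' n : ℕ, ENNReal.ofReal (((n : ℝ) + 1) ^ (p - 2 - β)) * b n ^ p := by
  have hp1 : 0 < p - 1 := sub_pos.2 hp
  -- Hölder with weight `(n + 1) ^ (d - 1)`: a small `d > 0` makes both Gamma integrals converge.
  obtain ⟨d, hd0, hd⟩ : ∃ d, 0 < d ∧ d < min 1 ((β + 1) / (p - 1)) :=
    exists_between (lt_min one_pos (div_pos (by linarith) hp1))
  have hd1 : d < 1 := hd.trans_le (min_le_left _ _)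
  have hdβ : d * (p - 1) < β + 1 := (lt_div_iff₀ hp1).1 (hd.trans_le (min_le_right _ _))
  set γ : ℝ := β + 1 - d * (p - 1) with hγ
  have hγ0 : 0 < γ := sub_pos.2 hdβ
  set D : ℝ := Real.Gamma d ^ (p - 1)
  have hD : 0 ≤ D := Real.rpow_nonneg (Real.Gamma_pos_of_pos hd0).le _
  refine ⟨ENNReal.ofReal D * ENNReal.ofReal (Real.Gamma γ), by finiteness, fun b => ?_⟩
  have hpointwise {t : ℝ} (ht : 0 < t) : ENNReal.ofReal (t ^ β) * expSum b t ^ p ≤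
      ENNReal.ofReal D * (ENNReal.ofReal (t ^ (γ - 1)) *
        expSum (fun n => b n ^ p * ENNReal.ofReal (((n : ℝ) + 1) ^ ((1 - d) * (p - 1)))) t) := by
    have hexp : t ^ (γ - 1) = t ^ β * t ^ (-d * (p - 1)) := by
      rw [← Real.rpow_add ht, hγ]; ring_nf
    have h := expSum_rpow_le hp.le (sub_nonneg.2 hd1.le) (sub_lt_self 1 hd0) ht b
    rw [sub_sub_cancel, sub_sub_cancel_left, ENNReal.ofReal_mul hD] at h
    rw [hexp, ENNReal.ofReal_mul (by positivity)]
    exact (mul_le_mul_right h _).trans_eq (by ring)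
  calc ∫⁻ t in Ioi (0 : ℝ), ENNReal.ofReal (t ^ β) * expSum b t ^ p
      ≤ ∫⁻ t in Ioi (0 : ℝ), ENNReal.ofReal D * (ENNReal.ofReal (t ^ (γ - 1)) *
          expSum (fun n => b n ^ p * ENNReal.ofReal (((n : ℝ) + 1) ^ ((1 - d) * (p - 1)))) t) :=
        setLIntegral_mono' measurableSet_Ioi fun t ht => hpointwise ht
    _ = ENNReal.ofReal D * ENNReal.ofReal (Real.Gamma γ) * ∑' n : ℕ,
          b n ^ p * ENNReal.ofReal (((n : ℝ) + 1) ^ ((1 - d) * (p - 1))) *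
            ENNReal.ofReal (((n : ℝ) + 1) ^ (-γ)) := by
        rw [lintegral_const_mul _ (by fun_prop), lintegral_rpow_mul_expSum hγ0, mul_assoc]
    _ = _ := by
        congr 1
        refine tsum_congr fun n => ?_
        rw [mul_assoc, ← ENNReal.ofReal_mul (by positivity), ← Real.rpow_add (by positivity),
          mul_comm, hγ]
        ring_nf

end HardyLittlewood

section AbelSummation

theorem one_sub_mul_tsum_mul_pow {R : Type*} [CommRing R] [TopologicalSpace R]
    [IsTopologicalRing R] [T2Space R] {b : ℕ → R} {x : R} (hb : Summable fun n => b n * x ^ n) :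
    (1 - x) * ∑' n, b n * x ^ n = b 0 + ∑' n, (b (n + 1) - b n) * x ^ (n + 1) := by
  have hb' : Summable fun n => b n * x ^ (n + 1) := (hb.mul_left x).congr fun n => by ring
  have hx : x * ∑' n, b n * x ^ n = ∑' n, b n * x ^ (n + 1) := by
    rw [← hb.tsum_mul_left]
    exact tsum_congr fun n => by ring
  rw [sub_mul, one_mul, hx, hb.tsum_eq_zero_add, pow_zero, mul_one, add_sub_assoc,
    ← ((summable_nat_add_iff 1).2 hb).tsum_sub hb']
  simp only [sub_mul]

/-- The total variation of `b` is controlled by its upward increments, because `b ≥ 0`. -/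
theorem norm_one_sub_mul_tsum_le {b d : ℕ → ℝ} {z : ℂ} (hb : 0 ≤ b) (hd : 0 ≤ d)
    (hbd : ∀ n, b (n + 1) - b n ≤ d n) (hz : ‖z‖ ≤ 1) (hbz : Summable fun n => b n * ‖z‖ ^ n)
    (hdz : Summable fun n => d n * ‖z‖ ^ (n + 1)) :
    ‖(1 - z) * ∑' n, (b n : ℂ) * z ^ n‖ ≤ 2 * (b 0 + ∑' n, d n * ‖z‖ ^ (n + 1)) := by
  have hbC : Summable fun n => (b n : ℂ) * z ^ n :=
    .of_norm <| hbz.congr fun n => by simp [abs_of_nonneg (hb n)]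
  have hdiff : Summable fun n => (b (n + 1) - b n) * ‖z‖ ^ (n + 1) :=
    (((summable_nat_add_iff 1).2 hbz).sub (hbz.mul_left ‖z‖)).congr fun n => by ring
  have hterm (n : ℕ) : ‖((b (n + 1) : ℂ) - b n) * z ^ (n + 1)‖ ≤
      2 * (d n * ‖z‖ ^ (n + 1)) - (b (n + 1) - b n) * ‖z‖ ^ (n + 1) := by
    have habs : |b (n + 1) - b n| ≤ 2 * d n - (b (n + 1) - b n) :=
      abs_le.2 ⟨by linarith [show 0 ≤ d n from hd n], by linarith [hbd n]⟩
    rw [norm_mul, norm_pow, ← Complex.ofReal_sub, Complex.norm_real, Real.norm_eq_abs,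
      ← mul_assoc, ← sub_mul]
    gcongr
  have htele : 0 ≤ b 0 + ∑' n, (b (n + 1) - b n) * ‖z‖ ^ (n + 1) := by
    rw [← one_sub_mul_tsum_mul_pow hbz]
    exact mul_nonneg (sub_nonneg.2 hz) (tsum_nonneg fun n => mul_nonneg (hb n) (by positivity))
  rw [one_sub_mul_tsum_mul_pow hbC]
  calc ‖(b 0 : ℂ) + ∑' n, ((b (n + 1) : ℂ) - b n) * z ^ (n + 1)‖
      ≤ ‖(b 0 : ℂ)‖ + ‖∑' n, ((b (n + 1) : ℂ) - b n) * z ^ (n + 1)‖ := norm_add_le _ _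
    _ ≤ b 0 + (2 * ∑' n, d n * ‖z‖ ^ (n + 1) - ∑' n, (b (n + 1) - b n) * ‖z‖ ^ (n + 1)) := by
        gcongr
        · rw [Complex.norm_real, Real.norm_of_nonneg (hb 0)]
        · exact tsum_of_norm_bounded ((hdz.hasSum.mul_left 2).sub hdiff.hasSum) hterm
    _ ≤ _ := by linarith

variable {a : ℕ → ℝ} {r : ℝ} {z : ℂ}

theorem summable_add_one_mul_mul_pow_of_antitone (ha : Antitone a) (h0 : ∀ n, 0 ≤ a n)
    (hr : |r| < 1) :
    Summable fun n : ℕ => ((n : ℝ) + 1) * a n * r ^ n := by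
  have hgeom : Summable fun n : ℕ => ((n : ℝ) + 1) * r ^ n :=
    ((summable_pow_mul_geometric_of_norm_lt_one 1 hr).add
      (summable_geometric_of_norm_lt_one hr)).congr fun n => by ring
  refine .of_norm_bounded (hgeom.norm.mul_left (a 0)) fun n => ?_
  rw [mul_right_comm, norm_mul, Real.norm_of_nonneg (h0 n), mul_comm]
  gcongr
  exact ha n.zero_le

theorem summable_mul_pow_of_antitone (ha : Antitone a) (h0 : ∀ n, 0 ≤ a n) (hr : |r| < 1) :
    Summable fun n => a n * r ^ n := by
  refine .of_norm_bounded ((summable_add_one_mul_mul_pow_of_antitone ha h0 hr).norm) fun n => ?_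
  rw [mul_assoc, norm_mul _ (a n * r ^ n), Real.norm_of_nonneg n.cast_add_one_pos.le]
  exact le_mul_of_one_le_left (norm_nonneg _) (by simp)

theorem norm_one_sub_mul_tsum_tail_le (ha : Antitone a) (h0 : ∀ n, 0 ≤ a n) (hz : ‖z‖ < 1) (N : ℕ) :
    ‖(1 - z) * ∑' n : ℕ, (((↑(n + N) + 1) * a (n + N) : ℝ) : ℂ) * z ^ (n + N)‖ ≤
      2 * (N * a N * ‖z‖ ^ N + ∑' n, a (n + N) * ‖z‖ ^ (n + N)) := by
  have hr : |‖z‖| < 1 := by rwa [abs_norm]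
  have haN : Antitone fun n => a (n + N) := fun m n h => ha (by gcongr)
  have hs : Summable fun n => a (n + N) * ‖z‖ ^ n :=
    summable_mul_pow_of_antitone haN (fun n => h0 _) hr
  have hb : Summable fun n : ℕ => (((n + N : ℕ) : ℝ) + 1) * a (n + N) * ‖z‖ ^ n :=
    ((summable_add_one_mul_mul_pow_of_antitone haN (fun n => h0 _) hr).add
      (hs.mul_left (N : ℝ))).congr fun n => by push_cast; ring
  have hinc (n : ℕ) : (↑(n + 1 + N) + 1) * a (n + 1 + N) - (↑(n + N) + 1) * a (n + N) ≤
      a (n + 1 + N) := by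
    have hstep : a (n + 1 + N) ≤ a (n + N) := ha (by lia)
    push_cast
    nlinarith [show (0 : ℝ) ≤ n + N + 1 by positivity]
  have key := norm_one_sub_mul_tsum_le (b := fun n => (↑(n + N) + 1) * a (n + N))
    (fun n => mul_nonneg (by positivity) (h0 _)) (fun n => h0 (n + 1 + N)) hinc hz.le hb
    ((summable_nat_add_iff 1).2 hs)
  have htail : ∑' n : ℕ, (((↑(n + N) + 1) * a (n + N) : ℝ) : ℂ) * z ^ (n + N) =
      z ^ N * ∑' n : ℕ, (((↑(n + N) + 1) * a (n + N) : ℝ) : ℂ) * z ^ n := by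
    rw [← tsum_mul_left]
    exact tsum_congr fun n => by ring
  have hsum : ∑' n, a (n + N) * ‖z‖ ^ (n + N) =
      ‖z‖ ^ N * (a N + ∑' n, a (n + 1 + N) * ‖z‖ ^ (n + 1)) := by
    rw [show a N = a (0 + N) * ‖z‖ ^ 0 by simp, ← hs.tsum_eq_zero_add, ← tsum_mul_left]
    exact tsum_congr fun n => by ring
  rw [htail, hsum, mul_left_comm, norm_mul, norm_pow]
  refine (mul_le_mul_of_nonneg_left key (by positivity)).trans_eq ?_
  simp only [zero_add]
  ring

theorem sq_mul_mul_pow_le_sum (ha : Antitone a) (h0 : ∀ n, 0 ≤ a n) (hr0 : 0 ≤ r) (hr1 : r ≤ 1)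
    (N : ℕ) :
    (N : ℝ) ^ 2 * (a N * r ^ N) ≤ 2 * ∑ n ∈ Finset.range N, ((n : ℝ) + 1) * a n * r ^ n := by
  have hgauss : (N : ℝ) ^ 2 ≤ 2 * ∑ n ∈ Finset.range N, ((n : ℝ) + 1) := by
    induction N with
    | zero => simp
    | succ N ih => rw [Finset.sum_range_succ]; push_cast; linarith
  calc (N : ℝ) ^ 2 * (a N * r ^ N)
      ≤ (2 * ∑ n ∈ Finset.range N, ((n : ℝ) + 1)) * (a N * r ^ N) := by
        have := h0 N
        gcongr
    _ = 2 * ∑ n ∈ Finset.range N, ((n : ℝ) + 1) * (a N * r ^ N) := by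
        rw [mul_assoc, Finset.sum_mul]
    _ ≤ _ := by
        refine mul_le_mul_of_nonneg_left (Finset.sum_le_sum fun n hn => ?_) zero_le_two
        have hnN := (Finset.mem_range.1 hn).le
        rw [mul_assoc _ (a n)]
        refine mul_le_mul_of_nonneg_left ?_ n.cast_add_one_pos.le
        exact mul_le_mul (ha hnN) (pow_le_pow_of_le_one hr0 hr1 hnN) (by positivity) (h0 n)

theorem norm_tsum_add_one_mul_mul_pow_le_add (ha : Antitone a) (h0 : ∀ n, 0 ≤ a n)
    (hz : ‖z‖ < 1) {N : ℕ} (hN : ‖1 - z‖⁻¹ ≤ N) :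
    ‖∑' n : ℕ, ((((n : ℝ) + 1) * a n : ℝ) : ℂ) * z ^ n‖ ≤
      5 * ∑ n ∈ Finset.range N, ((n : ℝ) + 1) * a n * ‖z‖ ^ n +
        2 * ∑' n, ‖1 - z‖⁻¹ * (a (n + N) * ‖z‖ ^ (n + N)) := by
  have hδ : 0 < ‖1 - z‖ := by linarith [norm_sub_norm_le 1 z, norm_one (α := ℂ)]
  have hterm (n : ℕ) : ‖((((n : ℝ) + 1) * a n : ℝ) : ℂ) * z ^ n‖ =
      ((n : ℝ) + 1) * a n * ‖z‖ ^ n := by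
    rw [norm_mul, norm_pow, Complex.norm_real, Real.norm_of_nonneg]
    exact mul_nonneg n.cast_add_one_pos.le (h0 n)
  have hs : Summable fun n : ℕ => ((((n : ℝ) + 1) * a n : ℝ) : ℂ) * z ^ n :=
    .of_norm <| (summable_add_one_mul_mul_pow_of_antitone ha h0
      (by rwa [abs_norm] : |‖z‖| < 1)).congr fun n => (hterm n).symm
  have hboundary : ‖1 - z‖⁻¹ * (N * a N * ‖z‖ ^ N) ≤
      2 * ∑ n ∈ Finset.range N, ((n : ℝ) + 1) * a n * ‖z‖ ^ n := by
    refine le_trans ?_ (sq_mul_mul_pow_le_sum ha h0 (norm_nonneg z) hz.le N)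
    rw [sq, mul_assoc (N : ℝ), mul_assoc (N : ℝ)]
    exact mul_le_mul_of_nonneg_right hN
      (mul_nonneg N.cast_nonneg (mul_nonneg (h0 N) (by positivity)))
  have htail := norm_one_sub_mul_tsum_tail_le ha h0 hz N
  rw [norm_mul, ← le_inv_mul_iff₀ hδ] at htail
  rw [← hs.sum_add_tsum_nat_add N, tsum_mul_left]
  refine (norm_add_le_of_le (norm_sum_le _ _) htail).trans ?_
  simp only [hterm]
  linarith

theorem le_four_mul_inv_inv_add {x δ : ℝ} (hx : 0 < x) (hδ : 0 < δ) (hδ2 : δ ≤ 2)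
    (hxδ : (x - 1) * δ ≤ 1) : x ≤ 4 * (x⁻¹ + δ)⁻¹ := by
  rw [← div_eq_mul_inv, le_div_iff₀ (by positivity), mul_add, mul_inv_cancel₀ hx.ne']
  linarith

theorem inv_le_two_mul_inv_inv_add {x δ : ℝ} (hx : 0 < x) (hδ : 0 < δ) (hxδ : δ⁻¹ ≤ x) :
    δ⁻¹ ≤ 2 * (x⁻¹ + δ)⁻¹ := by
  have hle : x⁻¹ ≤ δ := inv_le_of_inv_le₀ hδ hxδ
  rw [inv_eq_one_div δ, ← div_eq_mul_inv, div_le_div_iff₀ hδ (by positivity)]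
  linarith

theorem summable_mul_pow_mul_inv_of_antitone (ha : Antitone a) (h0 : ∀ n, 0 ≤ a n)
    (hr0 : 0 ≤ r) (hr1 : r < 1) {δ : ℝ} (hδ : 0 ≤ δ) :
    Summable fun n : ℕ => a n * r ^ n * (((n : ℝ) + 1)⁻¹ + δ)⁻¹ := by
  have har (n : ℕ) : 0 ≤ a n * r ^ n := mul_nonneg (h0 n) (by positivity)
  refine .of_nonneg_of_le (fun n => mul_nonneg (har n) (by positivity)) (fun n => ?_)
    (summable_add_one_mul_mul_pow_of_antitone ha h0 (abs_lt.2 ⟨by linarith, hr1⟩))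
  rw [mul_assoc ((n : ℝ) + 1), mul_comm ((n : ℝ) + 1)]
  refine mul_le_mul_of_nonneg_left ?_ (har n)
  exact inv_le_of_inv_le₀ n.cast_add_one_pos (le_add_of_nonneg_right hδ)

theorem norm_tsum_add_one_mul_mul_pow_le (ha : Antitone a) (h0 : ∀ n, 0 ≤ a n) (hz : ‖z‖ < 1) :
    ‖∑' n : ℕ, ((((n : ℝ) + 1) * a n : ℝ) : ℂ) * z ^ n‖ ≤
      20 * ∑' n : ℕ, a n * ‖z‖ ^ n * (((n : ℝ) + 1)⁻¹ + ‖1 - z‖)⁻¹ := by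
  have hδ0 : 0 < ‖1 - z‖ := by linarith [norm_sub_norm_le 1 z, norm_one (α := ℂ)]
  have hδ2 : ‖1 - z‖ ≤ 2 := by linarith [norm_sub_le 1 z, norm_one (α := ℂ)]
  have har (n : ℕ) : 0 ≤ a n * ‖z‖ ^ n := mul_nonneg (h0 n) (by positivity)
  have hws := summable_mul_pow_mul_inv_of_antitone ha h0 (norm_nonneg z) hz hδ0.le
  have hNle : ‖1 - z‖⁻¹ ≤ ⌈‖1 - z‖⁻¹⌉₊ := Nat.le_ceil _
  set δ := ‖1 - z‖
  set N := ⌈δ⁻¹⌉₊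
  set w : ℕ → ℝ := fun n => a n * ‖z‖ ^ n * (((n : ℝ) + 1)⁻¹ + δ)⁻¹ with hw
  have hhead (n : ℕ) (hn : n ∈ Finset.range N) : ((n : ℝ) + 1) * a n * ‖z‖ ^ n ≤ 4 * w n := by
    have hnδ : (n : ℝ) * δ ≤ 1 := by
      rw [← le_div_iff₀ hδ0, one_div]
      exact (Nat.lt_ceil.1 (Finset.mem_range.1 hn)).le
    have hle := le_four_mul_inv_inv_add n.cast_add_one_pos hδ0 hδ2 (by simpa)
    rw [mul_assoc, mul_comm]
    exact (mul_le_mul_of_nonneg_left hle (har n)).trans_eq (mul_left_comm ..)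
  have htail (n : ℕ) : δ⁻¹ * (a (n + N) * ‖z‖ ^ (n + N)) ≤ 2 * w (n + N) := by
    have hnN : δ⁻¹ ≤ ((n + N : ℕ) : ℝ) + 1 := by
      push_cast
      linarith [n.cast_nonneg (α := ℝ)]
    have hle := inv_le_two_mul_inv_inv_add (Nat.cast_add_one_pos _) hδ0 hnN
    exact (mul_le_mul_of_nonneg_right hle (har _)).trans_eq (by rw [hw]; ring)
  have hwN : Summable fun n => 2 * w (n + N) := ((summable_nat_add_iff N).2 hws).mul_left 2
  have htail0 (n : ℕ) : 0 ≤ δ⁻¹ * (a (n + N) * ‖z‖ ^ (n + N)) :=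
    mul_nonneg (by positivity) (har _)
  have hw0 : 0 ≤ ∑' n, w (n + N) := tsum_nonneg fun n => mul_nonneg (har _) (by positivity)
  calc ‖∑' n : ℕ, ((((n : ℝ) + 1) * a n : ℝ) : ℂ) * z ^ n‖
      ≤ 5 * ∑ n ∈ Finset.range N, ((n : ℝ) + 1) * a n * ‖z‖ ^ n +
          2 * ∑' n, δ⁻¹ * (a (n + N) * ‖z‖ ^ (n + N)) :=
        norm_tsum_add_one_mul_mul_pow_le_add ha h0 hz hNle
    _ ≤ 5 * ∑ n ∈ Finset.range N, 4 * w n + 2 * ∑' n, 2 * w (n + N) := by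
        gcongr ?_ * ?_ + ?_ * ?_
        · exact Finset.sum_le_sum hhead
        · exact (hwN.of_nonneg_of_le htail0 htail).tsum_le_tsum htail hwN
    _ ≤ 20 * ∑' n, w n := by
        rw [← hws.sum_add_tsum_nat_add N, ← Finset.mul_sum, tsum_mul_left]
        linarith

end AbelSummation

theorem setLIntegral_ball_eq_circleMap (c : ℂ) (ρ : ℝ) (F : ℂ → ℝ≥0∞) :
    ∫⁻ z in ball c ρ, F z = ∫⁻ q in Ioo 0 ρ ×ˢ Ioo (-Real.pi) Real.pi,
      ENNReal.ofReal q.1 * F (circleMap c q.1 q.2) := by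
  have hpolar (q : ℝ × ℝ) : c + Complex.polarCoord.symm q = circleMap c q.1 q.2 := by
    rw [Complex.polarCoord_symm_apply, circleMap, Complex.exp_mul_I, ← Complex.ofReal_cos,
      ← Complex.ofReal_sin]
  have hrect : (Iio ρ ×ˢ univ) ∩ polarCoord.target = Ioo 0 ρ ×ˢ Ioo (-Real.pi) Real.pi := by
    rw [polarCoord_target, prod_inter_prod, inter_comm, Ioi_inter_Iio, univ_inter]
  have hmem (q : ℝ × ℝ) (hq : q ∈ polarCoord.target) :
      circleMap c q.1 q.2 ∈ ball c ρ ↔ q ∈ Iio ρ ×ˢ univ := by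
    rw [polarCoord_target] at hq
    simp [circleMap, abs_of_pos (show 0 < q.1 from hq.1)]
  rw [← lintegral_indicator measurableSet_ball, ← lintegral_add_left_eq_self _ c,
    ← Complex.lintegral_comp_polarCoord_symm, ← hrect,
    ← setLIntegral_indicator (measurableSet_Iio.prod .univ)]
  refine setLIntegral_congr_fun polarCoord.open_target.measurableSet fun q hq => ?_
  by_cases hqρ : q ∈ Iio ρ ×ˢ univ
  · rw [hpolar, indicator_of_mem ((hmem q hq).2 hqρ), indicator_of_mem hqρ, smul_eq_mul]
  · rw [hpolar, indicator_of_notMem (mt (hmem q hq).1 hqρ), indicator_of_notMem hqρ, smul_zero]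

theorem rpow_le_rpow_abs {K x : ℝ} (hK : 1 ≤ K) (h₁ : K⁻¹ ≤ x) (h₂ : x ≤ K) (q : ℝ) :
    x ^ q ≤ K ^ |q| := by
  have hK0 : 0 < K := one_pos.trans_le hK
  have hx0 : 0 < x := (inv_pos.2 hK0).trans_le h₁
  rcases le_total 0 q with hq | hq
  · rw [abs_of_nonneg hq]
    gcongr
  · rw [abs_of_nonpos hq, ← inv_inv K, Real.inv_rpow (by positivity), Real.rpow_neg (by positivity),
      inv_inv]
    exact Real.rpow_le_rpow_of_nonpos (by positivity) h₁ hq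

theorem rpow_neg_abs_le_rpow {K x : ℝ} (hK : 1 ≤ K) (h₁ : K⁻¹ ≤ x) (h₂ : x ≤ K) (q : ℝ) :
    K ^ (-|q|) ≤ x ^ q := by
  have hx0 : 0 < x := (inv_pos.2 (one_pos.trans_le hK)).trans_le h₁
  have h := rpow_le_rpow_abs hK h₁ h₂ (-q)
  rw [abs_neg, Real.rpow_neg hx0.le] at h
  rw [Real.rpow_neg (by positivity)]
  exact inv_le_of_inv_le₀ (by positivity) h

/-- The integral in the Bergman norm, with respect to unnormalized area and without the factor
`α + 1`. -/
noncomputable def bergmanIntegral (p α : ℝ) (g : ℂ → ℂ) : ℝ≥0∞ :=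
  ∫⁻ z in ball (0 : ℂ) 1, ENNReal.ofReal ((1 - ‖z‖ ^ 2) ^ α) * ‖g z‖ₑ ^ p

section Sufficiency

/-- For decreasing `a ≥ 0` this dominates, up to a constant, the modulus of `∑ (n + 1) aₙ zⁿ` at
`z = (1 - t)e^{iθ}`. -/
noncomputable def kernelSum (a : ℕ → ℝ) (θ t : ℝ) : ℝ≥0∞ :=
  expSum (fun n => ENNReal.ofReal (a n * (((n : ℝ) + 1)⁻¹ + |θ|)⁻¹)) t

theorem measurable_kernelSum (a : ℕ → ℝ) : Measurable (Function.uncurry (kernelSum a)) :=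
  measurable_expSum_comp (fun n => by fun_prop) (by fun_prop)

theorem abs_le_pi_mul_norm_one_sub_circleMap {r θ : ℝ} (hr : 0 ≤ r) (hθ : |θ| ≤ Real.pi) :
    |θ| ≤ Real.pi * ‖1 - circleMap 0 r θ‖ := by
  have hpi := Real.pi_pos
  have hnorm : ‖1 - circleMap 0 r θ‖ ^ 2 = (r - Real.cos θ) ^ 2 + Real.sin θ ^ 2 := by
    rw [Complex.sq_norm, Complex.normSq_apply]
    simp [circleMap, Complex.exp_mul_I, ← Complex.ofReal_cos, ← Complex.ofReal_sin]
    linear_combination (r ^ 2 - 1) * Real.sin_sq_add_cos_sq θ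
  rcases le_total |θ| (Real.pi / 2) with hsmall | hlarge
  · have hsin : |Real.sin θ| ≤ ‖1 - circleMap 0 r θ‖ :=
      abs_le_of_sq_le_sq (by rw [hnorm]; linarith [sq_nonneg (r - Real.cos θ)]) (norm_nonneg _)
    have hjordan := (Real.mul_abs_le_abs_sin hsmall).trans hsin
    rw [div_mul_eq_mul_div, div_le_iff₀ hpi] at hjordan
    linarith [abs_nonneg θ]
  · have hcos : Real.cos θ ≤ 0 := by
      rw [← Real.cos_abs]
      exact Real.cos_nonpos_of_pi_div_two_le_of_le hlarge (by linarith)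
    have hone : 1 ≤ ‖1 - circleMap 0 r θ‖ := by
      rw [← one_le_sq_iff₀ (norm_nonneg _), hnorm]
      nlinarith [Real.sin_sq_add_cos_sq θ]
    nlinarith

theorem pow_le_exp_one_mul_exp {r : ℝ} (hr : 0 ≤ r) (n : ℕ) :
    r ^ n ≤ Real.exp 1 * Real.exp (-((n + 1) * (1 - r))) := by
  have hexp : r ≤ Real.exp (-(1 - r)) := by linarith [Real.add_one_le_exp (-(1 - r))]
  calc r ^ n ≤ Real.exp (-(1 - r)) ^ n := by gcongr
    _ = Real.exp (n * -(1 - r)) := by rw [← Real.exp_nat_mul]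
    _ ≤ Real.exp (1 + -((n + 1) * (1 - r))) := Real.exp_le_exp.2 (by linarith)
    _ = _ := Real.exp_add _ _

theorem lintegral_add_abs_rpow_neg {p δ : ℝ} (hp : 1 < p) (hδ : 0 < δ) :
    ∫⁻ θ : ℝ, ENNReal.ofReal ((δ + |θ|) ^ (-p)) =
      ENNReal.ofReal (∫ x : ℝ, (1 + ‖x‖) ^ (-p)) * ENNReal.ofReal (δ ^ (1 - p)) := by
  have hint : Integrable fun x : ℝ => (1 + ‖δ⁻¹ * x‖) ^ (-p) :=
    (integrable_one_add_norm (by simpa using hp)).comp_mul_left' (inv_ne_zero hδ.ne')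
  have hscale (θ : ℝ) : (δ + |θ|) ^ (-p) = δ ^ (-p) * (1 + ‖δ⁻¹ * θ‖) ^ (-p) := by
    rw [← Real.mul_rpow hδ.le (by positivity), norm_mul, Real.norm_of_nonneg (by positivity),
      Real.norm_eq_abs, mul_add, mul_one, mul_inv_cancel_left₀ hδ.ne']
  simp_rw [hscale]
  rw [← ofReal_integral_eq_lintegral_ofReal (hint.const_mul _)
    (Eventually.of_forall fun x => by positivity), integral_const_mul,
    Measure.integral_comp_mul_left (fun x : ℝ => (1 + ‖x‖) ^ (-p)), inv_inv, abs_of_pos hδ,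
    smul_eq_mul, ← ENNReal.ofReal_mul (integral_nonneg fun x => by positivity),
    sub_eq_neg_add, Real.rpow_add hδ, Real.rpow_one]
  congr 1
  ring

variable {a : ℕ → ℝ} {r θ : ℝ}

theorem inv_add_norm_one_sub_circleMap_le (hr : 0 ≤ r) (hθ : |θ| ≤ Real.pi) {x : ℝ} (hx : 0 < x) :
    (x + ‖1 - circleMap 0 r θ‖)⁻¹ ≤ Real.pi * (x + |θ|)⁻¹ := by
  have hpi := Real.pi_pos
  rw [← div_eq_mul_inv, inv_eq_one_div, div_le_div_iff₀ (by positivity) (by positivity)]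
  nlinarith [abs_le_pi_mul_norm_one_sub_circleMap hr hθ, Real.pi_gt_three]

theorem enorm_tsum_circleMap_le_kernelSum (ha : Antitone a) (h0 : ∀ n, 0 ≤ a n) (hr0 : 0 ≤ r)
    (hr1 : r < 1) (hθ : |θ| ≤ Real.pi) :
    ‖∑' n : ℕ, ((((n : ℝ) + 1) * a n : ℝ) : ℂ) * circleMap 0 r θ ^ n‖ₑ ≤
      ENNReal.ofReal (20 * Real.pi * Real.exp 1) * kernelSum a θ (1 - r) := by
  have := Real.pi_pos
  have hz : ‖circleMap 0 r θ‖ = r := by rw [norm_circleMap_zero, abs_of_nonneg hr0]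
  have hterm (n : ℕ) : a n * r ^ n * (((n : ℝ) + 1)⁻¹ + ‖1 - circleMap 0 r θ‖)⁻¹ ≤
      Real.pi * Real.exp 1 *
        (a n * (((n : ℝ) + 1)⁻¹ + |θ|)⁻¹ * Real.exp (-((n + 1) * (1 - r)))) := by
    calc a n * r ^ n * (((n : ℝ) + 1)⁻¹ + ‖1 - circleMap 0 r θ‖)⁻¹
        ≤ a n * (Real.exp 1 * Real.exp (-((n + 1) * (1 - r)))) *
            (Real.pi * (((n : ℝ) + 1)⁻¹ + |θ|)⁻¹) := by
          have := h0 n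
          gcongr
          · exact pow_le_exp_one_mul_exp hr0 n
          · exact inv_add_norm_one_sub_circleMap_le hr0 hθ (by positivity)
      _ = _ := by ring
  have hsum := summable_mul_pow_mul_inv_of_antitone ha h0 hr0 hr1
    (norm_nonneg (1 - circleMap 0 r θ))
  have hbound := norm_tsum_add_one_mul_mul_pow_le ha h0 (z := circleMap 0 r θ) (hz.trans_lt hr1)
  rw [hz] at hbound
  calc ‖∑' n : ℕ, ((((n : ℝ) + 1) * a n : ℝ) : ℂ) * circleMap 0 r θ ^ n‖ₑ
      ≤ ENNReal.ofReal 20 * ∑' n : ℕ, ENNReal.ofReal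
          (a n * r ^ n * (((n : ℝ) + 1)⁻¹ + ‖1 - circleMap 0 r θ‖)⁻¹) := by
        rw [← ENNReal.ofReal_tsum_of_nonneg (fun n => ?_) hsum, ← ENNReal.ofReal_mul (by norm_num),
          ← ofReal_norm]
        · exact ENNReal.ofReal_le_ofReal hbound
        · exact mul_nonneg (mul_nonneg (h0 n) (by positivity)) (by positivity)
    _ ≤ ENNReal.ofReal 20 * ∑' n : ℕ, ENNReal.ofReal (Real.pi * Real.exp 1 *
          (a n * (((n : ℝ) + 1)⁻¹ + |θ|)⁻¹ * Real.exp (-((n + 1) * (1 - r))))) :=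
        mul_le_mul_right (ENNReal.tsum_le_tsum fun n => ENNReal.ofReal_le_ofReal (hterm n)) _
    _ = _ := by
        rw [mul_assoc 20, ENNReal.ofReal_mul (by norm_num : (0 : ℝ) ≤ 20), mul_assoc, kernelSum,
          expSum, ← ENNReal.tsum_mul_left (a := ENNReal.ofReal (Real.pi * Real.exp 1))]
        congr 2 with n
        rw [← ENNReal.ofReal_mul (mul_nonneg (h0 n) (by positivity)),
          ← ENNReal.ofReal_mul (by positivity)]

/-- The two factors on the right are functions of `θ` and `1 - r`, so that Tonelli's theorem
reduces the Bergman integral to the Hardy–Littlewood inequality. -/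
theorem weight_mul_enorm_tsum_circleMap_rpow_le {p : ℝ} (hp : 0 ≤ p) (α : ℝ) (ha : Antitone a)
    (h0 : ∀ n, 0 ≤ a n) (hr0 : 0 ≤ r) (hr1 : r < 1) (hθ : |θ| ≤ Real.pi) :
    ENNReal.ofReal ((1 - r ^ 2) ^ α) *
        ‖∑' n : ℕ, ((((n : ℝ) + 1) * a n : ℝ) : ℂ) * circleMap 0 r θ ^ n‖ₑ ^ p ≤
      ENNReal.ofReal (2 ^ |α|) * ENNReal.ofReal (20 * Real.pi * Real.exp 1) ^ p *
        (ENNReal.ofReal ((1 - r) ^ α) * kernelSum a θ (1 - r) ^ p) := by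
  have hweight : (1 - r ^ 2) ^ α ≤ 2 ^ |α| * (1 - r) ^ α := by
    rw [show 1 - r ^ 2 = (1 + r) * (1 - r) by ring,
      Real.mul_rpow (by positivity) (sub_nonneg.2 hr1.le)]
    have := rpow_le_rpow_abs one_le_two (by linarith : (2 : ℝ)⁻¹ ≤ 1 + r) (by linarith) α
    gcongr
  calc _ ≤ ENNReal.ofReal (2 ^ |α| * (1 - r) ^ α) *
        (ENNReal.ofReal (20 * Real.pi * Real.exp 1) * kernelSum a θ (1 - r)) ^ p := by
        gcongr
        exact enorm_tsum_circleMap_le_kernelSum ha h0 hr0 hr1 hθ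
    _ = _ := by
        rw [ENNReal.mul_rpow_of_nonneg _ _ hp, ENNReal.ofReal_mul (by positivity)]
        ring

theorem lintegral_ofReal_mul_inv_add_abs_rpow {p δ c : ℝ} (hp : 1 < p) (hδ : 0 < δ) (hc : 0 ≤ c) :
    ∫⁻ θ : ℝ, ENNReal.ofReal (c * (δ + |θ|)⁻¹) ^ p =
      ENNReal.ofReal (∫ x : ℝ, (1 + ‖x‖) ^ (-p)) * ENNReal.ofReal (δ ^ (1 - p) * c ^ p) := by
  have hfactor (θ : ℝ) : ENNReal.ofReal (c * (δ + |θ|)⁻¹) ^ p =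
      ENNReal.ofReal (c ^ p) * ENNReal.ofReal ((δ + |θ|) ^ (-p)) := by
    rw [ENNReal.ofReal_rpow_of_nonneg (by positivity) (by linarith),
      ← ENNReal.ofReal_mul (by positivity), Real.mul_rpow hc (by positivity),
      Real.inv_rpow (by positivity), Real.rpow_neg (by positivity)]
  simp_rw [hfactor]
  rw [lintegral_const_mul _ (by fun_prop), lintegral_add_abs_rpow_neg hp hδ,
    ENNReal.ofReal_mul (by positivity)]
  ring

theorem exists_lintegral_lintegral_rpow_mul_kernelSum_rpow_le {p α : ℝ} (hp : 1 < p) (hα : -1 < α) :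
    ∃ C : ℝ≥0∞, C ≠ ⊤ ∧ ∀ a : ℕ → ℝ, (∀ n, 0 ≤ a n) →
      ∫⁻ θ : ℝ, ∫⁻ t in Ioi (0 : ℝ), ENNReal.ofReal (t ^ α) * kernelSum a θ t ^ p ≤
        C * ∑' n : ℕ, ENNReal.ofReal (((n : ℝ) + 1) ^ (2 * p - α - 3) * a n ^ p) := by
  obtain ⟨C, hC, hHL⟩ := exists_lintegral_rpow_mul_expSum_rpow_le hp hα
  set I : ℝ≥0∞ := ENNReal.ofReal (∫ x : ℝ, (1 + ‖x‖) ^ (-p))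
  refine ⟨C * I, by finiteness, fun a h0 => ?_⟩
  have hcoeff (n : ℕ) : ∫⁻ θ : ℝ, ENNReal.ofReal (((n : ℝ) + 1) ^ (p - 2 - α)) *
      ENNReal.ofReal (a n * (((n : ℝ) + 1)⁻¹ + |θ|)⁻¹) ^ p =
        I * ENNReal.ofReal (((n : ℝ) + 1) ^ (2 * p - α - 3) * a n ^ p) := by
    have hexp : ((n : ℝ) + 1) ^ (2 * p - α - 3) =
        ((n : ℝ) + 1) ^ (p - 2 - α) * (((n : ℝ) + 1)⁻¹) ^ (1 - p) := by
      rw [Real.inv_rpow (by positivity), ← Real.rpow_neg (by positivity),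
        ← Real.rpow_add (by positivity)]
      ring_nf
    rw [lintegral_const_mul _ (by fun_prop),
      lintegral_ofReal_mul_inv_add_abs_rpow hp (by positivity) (h0 n), hexp, mul_left_comm,
      ← ENNReal.ofReal_mul (by positivity), mul_assoc (_ ^ _)]
  calc _ ≤ ∫⁻ θ : ℝ, C * ∑' n : ℕ, ENNReal.ofReal (((n : ℝ) + 1) ^ (p - 2 - α)) *
          ENNReal.ofReal (a n * (((n : ℝ) + 1)⁻¹ + |θ|)⁻¹) ^ p :=
        lintegral_mono fun θ => hHL _
    _ = _ := by
        rw [lintegral_const_mul' _ _ hC, lintegral_tsum fun n => by fun_prop, mul_assoc]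
        simp only [hcoeff, ENNReal.tsum_mul_left]

theorem setLIntegral_Ioo_prod_comp_one_sub_le {G : ℝ → ℝ → ℝ≥0∞}
    (hG : Measurable (Function.uncurry G)) (s : Set ℝ) :
    ∫⁻ q in Ioo (0 : ℝ) 1 ×ˢ s, G q.2 (1 - q.1) ≤ ∫⁻ θ, ∫⁻ t in Ioi (0 : ℝ), G θ t := by
  have hG' : Measurable fun q : ℝ × ℝ => G q.2 (1 - q.1) :=
    hG.comp (measurable_snd.prodMk (measurable_const.sub measurable_fst))
  have hreflect (θ : ℝ) : ∫⁻ r in Ioo (0 : ℝ) 1, G θ (1 - r) ≤ ∫⁻ t in Ioi (0 : ℝ), G θ t := by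
    rw [← (volume.measurePreserving_sub_left (1 : ℝ)).setLIntegral_comp_preimage
      measurableSet_Ioi hG.of_uncurry_left]
    exact lintegral_mono_set fun r hr => sub_pos.2 hr.2
  calc ∫⁻ q in Ioo (0 : ℝ) 1 ×ˢ s, G q.2 (1 - q.1)
      = ∫⁻ θ in s, ∫⁻ r in Ioo (0 : ℝ) 1, G θ (1 - r) :=
        setLIntegral_prod_symm _ hG'.aemeasurable
    _ ≤ ∫⁻ θ in s, ∫⁻ t in Ioi (0 : ℝ), G θ t := lintegral_mono hreflect
    _ ≤ ∫⁻ θ, ∫⁻ t in Ioi (0 : ℝ), G θ t := setLIntegral_le_lintegral _ _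

theorem exists_bergmanIntegral_tsum_le {p α : ℝ} (hp : 1 < p) (hα : -1 < α) :
    ∃ C : ℝ≥0∞, C ≠ ⊤ ∧ ∀ a : ℕ → ℝ, Antitone a → (∀ n, 0 ≤ a n) →
      bergmanIntegral p α (fun z => ∑' n : ℕ, ((((n : ℝ) + 1) * a n : ℝ) : ℂ) * z ^ n) ≤
        C * ∑' n : ℕ, ENNReal.ofReal (((n : ℝ) + 1) ^ (2 * p - α - 3) * a n ^ p) := by
  obtain ⟨C, hC, hseries⟩ := exists_lintegral_lintegral_rpow_mul_kernelSum_rpow_le hp hα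
  set D : ℝ≥0∞ := ENNReal.ofReal (2 ^ |α|) * ENNReal.ofReal (20 * Real.pi * Real.exp 1) ^ p
  have hD : D ≠ ⊤ := ENNReal.mul_ne_top ENNReal.ofReal_ne_top (by finiteness)
  refine ⟨D * C, ENNReal.mul_ne_top hD hC, fun a ha h0 => ?_⟩
  set s : ℂ → ℂ := fun z => ∑' n : ℕ, ((((n : ℝ) + 1) * a n : ℝ) : ℂ) * z ^ n
  set G : ℝ → ℝ → ℝ≥0∞ := fun θ t => ENNReal.ofReal (t ^ α) * kernelSum a θ t ^ p
  have hG : Measurable (Function.uncurry G) :=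
    Measurable.mul (by fun_prop) ((measurable_kernelSum a).pow_const p)
  have hdom (q : ℝ × ℝ) (hq : q ∈ Ioo (0 : ℝ) 1 ×ˢ Ioo (-Real.pi) Real.pi) :
      ENNReal.ofReal q.1 * (ENNReal.ofReal ((1 - ‖circleMap 0 q.1 q.2‖ ^ 2) ^ α) *
        ‖s (circleMap 0 q.1 q.2)‖ₑ ^ p) ≤ D * G q.2 (1 - q.1) := by
    obtain ⟨hr, hθ⟩ := hq
    rw [norm_circleMap_zero, sq_abs]
    exact (mul_le_of_le_one_left' (ENNReal.ofReal_le_one.2 hr.2.le)).trans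
      (weight_mul_enorm_tsum_circleMap_rpow_le (by linarith) α ha h0 hr.1.le hr.2 (abs_lt.2 hθ).le)
  calc bergmanIntegral p α s
      ≤ ∫⁻ q in Ioo (0 : ℝ) 1 ×ˢ Ioo (-Real.pi) Real.pi, D * G q.2 (1 - q.1) := by
        rw [bergmanIntegral, setLIntegral_ball_eq_circleMap]
        exact setLIntegral_mono' (measurableSet_Ioo.prod measurableSet_Ioo) hdom
    _ ≤ D * ∫⁻ θ, ∫⁻ t in Ioi (0 : ℝ), G θ t := by
        rw [lintegral_const_mul' _ _ hD]
        exact mul_le_mul_right (setLIntegral_Ioo_prod_comp_one_sub_le hG _) D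
    _ ≤ D * (C * ∑' n : ℕ, ENNReal.ofReal (((n : ℝ) + 1) ^ (2 * p - α - 3) * a n ^ p)) :=
        mul_le_mul_right (hseries a h0) D
    _ = _ := (mul_assoc ..).symm

end Sufficiency

section PowerSeries

variable {c : ℕ → ℂ} {f : ℂ → ℂ} {R : ℝ} {z : ℂ}

theorem summable_norm_mul_pow_of_hasSum
    (hf : ∀ z ∈ ball (0 : ℂ) R, HasSum (fun n => c n * z ^ n) (f z)) {r : ℝ} (hr0 : 0 ≤ r)
    (hr : r < R) : Summable fun n => ‖c n‖ * r ^ n :=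
  (hf r (by simpa [abs_of_nonneg hr0] using hr)).summable.norm.congr fun n => by
    simp [abs_of_nonneg hr0]

theorem norm_mul_pow_le_of_mem_ball {r : ℝ} (n : ℕ) (hz : z ∈ ball (0 : ℂ) r) :
    ‖c n * z ^ n‖ ≤ ‖c n‖ * r ^ n := by
  rw [norm_mul, norm_pow]
  gcongr
  exact (mem_ball_zero_iff.1 hz).le

theorem differentiableOn_of_hasSum_pow
    (hf : ∀ z ∈ ball (0 : ℂ) R, HasSum (fun n => c n * z ^ n) (f z)) :
    DifferentiableOn ℂ f (ball 0 R) := by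
  intro z hz
  obtain ⟨r, hzr, hrR⟩ := exists_between (mem_ball_zero_iff.1 hz)
  have hdiff : DifferentiableOn ℂ (fun w => ∑' n, c n * w ^ n) (ball 0 r) :=
    Complex.differentiableOn_tsum_of_summable_norm
      (summable_norm_mul_pow_of_hasSum hf ((norm_nonneg z).trans hzr.le) hrR)
      (fun n => by fun_prop) isOpen_ball fun n _ => norm_mul_pow_le_of_mem_ball n
  exact ((hdiff.congr fun w hw => (hf w (ball_subset_ball hrR.le hw)).tsum_eq.symm).differentiableAt
    (isOpen_ball.mem_nhds (mem_ball_zero_iff.2 hzr))).differentiableWithinAt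

theorem hasSum_deriv_of_hasSum_pow
    (hf : ∀ z ∈ ball (0 : ℂ) R, HasSum (fun n => c n * z ^ n) (f z)) (hz : z ∈ ball (0 : ℂ) R) :
    HasSum (fun n : ℕ => ((n : ℂ) + 1) * c (n + 1) * z ^ n) (deriv f z) := by
  obtain ⟨r, hzr, hrR⟩ := exists_between (mem_ball_zero_iff.1 hz)
  have hzr' : z ∈ ball (0 : ℂ) r := mem_ball_zero_iff.2 hzr
  have hderiv : HasSum (fun n => deriv (fun w => c n * w ^ n) z)
      (deriv (fun w => ∑' n, c n * w ^ n) z) :=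
    Complex.hasSum_deriv_of_summable_norm
      (summable_norm_mul_pow_of_hasSum hf ((norm_nonneg z).trans hzr.le) hrR)
      (fun n => by fun_prop) isOpen_ball (fun n _ => norm_mul_pow_le_of_mem_ball n) hzr'
  have heq : (fun w => ∑' n, c n * w ^ n) =ᶠ[nhds z] f := by
    filter_upwards [isOpen_ball.mem_nhds hzr'] with w hw
    exact (hf w (ball_subset_ball hrR.le hw)).tsum_eq
  rw [heq.deriv_eq, ← hasSum_nat_add_iff' 1] at hderiv
  simpa [mul_comm, mul_left_comm, mul_assoc] using hderiv

end PowerSeries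

theorem tsum_le_add_tsum_two_pow_mul {u v : ℕ → ℝ≥0∞}
    (h : ∀ k, ∀ n ∈ Finset.Ico (2 ^ k) (2 ^ (k + 1)), u n ≤ v k) :
    ∑' n, u n ≤ u 0 + ∑' k, 2 ^ k * v k := by
  have hblock (K : ℕ) :
      ∑ n ∈ Finset.range (2 ^ K), u n ≤ u 0 + ∑ k ∈ Finset.range K, 2 ^ k * v k := by
    induction K with
    | zero => simp
    | succ K ih =>
      rw [← Finset.sum_range_add_sum_Ico u (pow_le_pow_right₀ one_le_two K.le_succ),
        Finset.sum_range_succ, ← add_assoc]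
      refine add_le_add ih ((Finset.sum_le_card_nsmul _ _ _ (h K)).trans_eq ?_)
      simp [pow_succ, mul_two]
  rw [ENNReal.tsum_eq_iSup_nat' (tendsto_pow_atTop_atTop_of_one_lt one_lt_two)]
  exact iSup_le fun K => (hblock K).trans (by gcongr; exact ENNReal.sum_le_tsum _)

theorem tsum_add_one_rpow_mul_rpow_le {p : ℝ} (hp : 0 ≤ p) (q : ℝ) {a : ℕ → ℝ} (ha : Antitone a)
    (h0 : ∀ n, 0 ≤ a n) :
    ∑' n : ℕ, ENNReal.ofReal (((n : ℝ) + 1) ^ q * a n ^ p) ≤ ENNReal.ofReal (a 0 ^ p) +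
      ENNReal.ofReal (2 ^ |q|) * ∑' k : ℕ, ENNReal.ofReal ((2 ^ k) ^ (q + 1) * a (2 ^ k) ^ p) := by
  refine (tsum_le_add_tsum_two_pow_mul
    (v := fun k => ENNReal.ofReal (2 ^ |q| * (2 ^ k) ^ q * a (2 ^ k) ^ p))
    fun k n hn => ?_).trans ?_
  · have := h0 n
    obtain ⟨hkn, hnk⟩ := Finset.mem_Ico.1 hn
    have hlow : (2 : ℝ) ^ k ≤ n := mod_cast hkn
    have hupp : (n : ℝ) + 1 ≤ 2 * 2 ^ k := by rw [← pow_succ']; exact_mod_cast hnk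
    have hpow : ((n : ℝ) + 1) ^ q ≤ 2 ^ |q| * (2 ^ k) ^ q := by
      rw [← div_le_iff₀ (by positivity), ← Real.div_rpow (by positivity) (by positivity)]
      refine rpow_le_rpow_abs one_le_two ?_ ?_ q
      · rw [le_div_iff₀ (by positivity)]
        linarith [show (0 : ℝ) < 2 ^ k by positivity]
      · rwa [div_le_iff₀ (by positivity)]
    gcongr
    exact ha hkn
  · refine add_le_add (by simp) ?_
    rw [← ENNReal.tsum_mul_left]
    refine ENNReal.tsum_le_tsum fun k => le_of_eq ?_
    rw [show (2 : ℝ≥0∞) ^ k = ENNReal.ofReal (2 ^ k) by simp, ← ENNReal.ofReal_mul (by positivity),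
      ← ENNReal.ofReal_mul (by positivity), Real.rpow_add_one (by positivity)]
    ring_nf

theorem summable_add_one_rpow_mul_succ_iff (q : ℝ) {u : ℕ → ℝ} (hu : ∀ n, 0 ≤ u n) :
    (Summable fun n : ℕ => ((n : ℝ) + 1) ^ q * u (n + 1)) ↔
      Summable fun n : ℕ => ((n : ℝ) + 1) ^ q * u n := by
  have hratio (n : ℕ) : ((n : ℝ) + 2) / (n + 1) ≤ 2 := by
    rw [div_le_iff₀ (by positivity)]; linarith [n.cast_nonneg (α := ℝ)]
  have hratio' (n : ℕ) : (2 : ℝ)⁻¹ ≤ ((n : ℝ) + 2) / (n + 1) := by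
    rw [le_div_iff₀ (by positivity)]; linarith [n.cast_nonneg (α := ℝ)]
  have hsplit (n : ℕ) : ((n : ℝ) + 2) ^ q = (((n : ℝ) + 2) / (n + 1)) ^ q * (n + 1) ^ q := by
    rw [← Real.mul_rpow (by positivity) (by positivity), div_mul_cancel₀ _ (by positivity)]
  rw [← summable_nat_add_iff (f := fun n : ℕ => ((n : ℝ) + 1) ^ q * u n) 1]
  push_cast
  simp only [add_assoc, one_add_one_eq_two]
  constructor <;> intro h
  · refine .of_nonneg_of_le (fun n => mul_nonneg (by positivity) (hu _)) (fun n => ?_)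
      (h.mul_left (2 ^ |q|))
    rw [hsplit, mul_assoc]
    exact mul_le_mul_of_nonneg_right (rpow_le_rpow_abs one_le_two (hratio' n) (hratio n) q)
      (mul_nonneg (by positivity) (hu _))
  · refine .of_nonneg_of_le (fun n => mul_nonneg (by positivity) (hu _)) (fun n => ?_)
      (h.mul_left (2 ^ |q|))
    rw [hsplit, mul_assoc, ← mul_assoc]
    refine le_mul_of_one_le_left (mul_nonneg (by positivity) (hu _)) ?_
    calc (1 : ℝ) = 2 ^ |q| * 2 ^ (-|q|) := by
          rw [← Real.rpow_add two_pos, add_neg_cancel, Real.rpow_zero]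
      _ ≤ _ := by
          gcongr
          exact rpow_neg_abs_le_rpow one_le_two (hratio' n) (hratio n) q

section MeanValue

variable {E : Type*} [NormedAddCommGroup E] [NormedSpace ℂ E] [CompleteSpace E]
  {g : ℂ → E} {c : ℂ} {r : ℝ}

theorem two_pi_mul_enorm_le_lintegral_circleMap (hg : DiffContOnCl ℂ g (ball c |r|)) :
    ENNReal.ofReal (2 * Real.pi) * ‖g c‖ₑ ≤
      ∫⁻ θ in Ioo (-Real.pi) Real.pi, ‖g (circleMap c r θ)‖ₑ := by
  have hpi := Real.pi_pos
  have hmean : ∫ θ in Ioc (-Real.pi) Real.pi, g (circleMap c r θ) = (2 * Real.pi) • g c := by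
    rw [← hg.circleAverage, Real.circleAverage_eq_integral_add (-Real.pi),
      smul_inv_smul₀ (by positivity), intervalIntegral.integral_comp_add_right
        (fun θ => g (circleMap c r θ)), ← intervalIntegral.integral_of_le (by linarith)]
    ring_nf
  calc ENNReal.ofReal (2 * Real.pi) * ‖g c‖ₑ
      = ‖∫ θ in Ioc (-Real.pi) Real.pi, g (circleMap c r θ)‖ₑ := by
        rw [hmean, enorm_smul, Real.enorm_of_nonneg (by positivity)]
    _ ≤ ∫⁻ θ in Ioc (-Real.pi) Real.pi, ‖g (circleMap c r θ)‖ₑ :=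
        enorm_integral_le_lintegral_enorm _
    _ = _ := by rw [restrict_Ioo_eq_restrict_Ioc]

theorem volume_ball_mul_enorm_le_setLIntegral (hg : DifferentiableOn ℂ g (ball c r)) :
    volume (ball c r) * ‖g c‖ₑ ≤ ∫⁻ z in ball c r, ‖g z‖ₑ := by
  have hcircle {s : ℝ} (hs : s ∈ Ioo 0 r) :
      ∫⁻ _ in Ioo (-Real.pi) Real.pi, ‖g c‖ₑ ≤
        ∫⁻ θ in Ioo (-Real.pi) Real.pi, ‖g (circleMap c s θ)‖ₑ := by
    have hdiff : DiffContOnCl ℂ g (ball c |s|) := by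
      rw [abs_of_pos hs.1]
      exact (hg.mono
        (closure_ball_subset_closedBall.trans (closedBall_subset_ball hs.2))).diffContOnCl
    convert two_pi_mul_enorm_le_lintegral_circleMap hdiff using 1
    rw [setLIntegral_const, Real.volume_Ioo, mul_comm]
    ring_nf
  have hmeas : AEMeasurable (fun q : ℝ × ℝ => ENNReal.ofReal q.1 * ‖g (circleMap c q.1 q.2)‖ₑ)
      ((volume.prod volume).restrict (Ioo 0 r ×ˢ Ioo (-Real.pi) Real.pi)) := by
    refine (measurable_fst.ennreal_ofReal.aemeasurable).mul
      (ContinuousOn.aemeasurable ?_ (measurableSet_Ioo.prod measurableSet_Ioo))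
    refine (hg.continuousOn.comp (by fun_prop) fun q hq => ?_).enorm
    rw [mem_ball, dist_eq_norm, circleMap_sub_center, norm_circleMap_zero, abs_of_pos hq.1.1]
    exact hq.1.2
  calc volume (ball c r) * ‖g c‖ₑ
      = ∫⁻ _ in ball c r, ‖g c‖ₑ := by rw [setLIntegral_const, mul_comm]
    _ = ∫⁻ s in Ioo 0 r, ∫⁻ _ in Ioo (-Real.pi) Real.pi, ENNReal.ofReal s * ‖g c‖ₑ := by
        rw [setLIntegral_ball_eq_circleMap]
        exact setLIntegral_prod _ (by fun_prop)
    _ ≤ ∫⁻ s in Ioo 0 r, ∫⁻ θ in Ioo (-Real.pi) Real.pi,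
          ENNReal.ofReal s * ‖g (circleMap c s θ)‖ₑ := by
        refine setLIntegral_mono' measurableSet_Ioo fun s hs => ?_
        rw [lintegral_const_mul' _ _ ENNReal.ofReal_ne_top,
          lintegral_const_mul' _ _ ENNReal.ofReal_ne_top]
        exact mul_le_mul_right (hcircle hs) _
    _ = ∫⁻ z in ball c r, ‖g z‖ₑ := by
        rw [setLIntegral_ball_eq_circleMap]
        exact (setLIntegral_prod _ hmeas).symm

theorem volume_ball_mul_enorm_rpow_le_setLIntegral {p : ℝ} (hp : 1 ≤ p)
    (hg : DifferentiableOn ℂ g (ball c r)) :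
    volume (ball c r) * ‖g c‖ₑ ^ p ≤ ∫⁻ z in ball c r, ‖g z‖ₑ ^ p := by
  have hp0 : 0 < p := one_pos.trans_le hp
  set V := volume (ball c r) with hV
  rcases eq_or_ne V 0 with hV0 | hV0
  · simp [hV0]
  have hVtop : V ≠ ⊤ := measure_ball_lt_top.ne
  have holder : ∫⁻ z in ball c r, ‖g z‖ₑ ≤
      (∫⁻ z in ball c r, ‖g z‖ₑ ^ p) ^ p⁻¹ * V ^ (1 - p⁻¹) := by
    simpa [eLpNorm', -Complex.volume_ball, ← hV] using
      eLpNorm'_le_eLpNorm'_mul_rpow_measure_univ one_pos hp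
        (hg.continuousOn.aestronglyMeasurable (μ := volume) measurableSet_ball)
  have hpow := ENNReal.rpow_le_rpow
    ((volume_ball_mul_enorm_le_setLIntegral hg).trans holder) hp0.le
  rw [ENNReal.mul_rpow_of_nonneg _ _ hp0.le, ENNReal.mul_rpow_of_nonneg _ _ hp0.le,
    ← ENNReal.rpow_mul, ← ENNReal.rpow_mul, inv_mul_cancel₀ hp0.ne', ENNReal.rpow_one, sub_mul,
    inv_mul_cancel₀ hp0.ne', one_mul, mul_comm _ (V ^ (p - 1))] at hpow
  have hVp : V ^ p = V ^ (p - 1) * V := by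
    rw [← sub_add_cancel p 1, ENNReal.rpow_add _ _ hV0 hVtop, ENNReal.rpow_one,
      add_sub_cancel_right]
  rw [← hV, hVp, mul_assoc] at hpow
  have hVp0 : V ^ (p - 1) ≠ 0 := (ENNReal.rpow_pos (pos_iff_ne_zero.2 hV0) hVtop).ne'
  exact (ENNReal.mul_le_mul_iff_right hVp0 (by finiteness)).1 hpow

end MeanValue

section WhitneyDiscs

/-- The disc with centre `1 - 1 / (2N)` whose radius is a quarter of the distance from its centre
to the unit circle. -/
def whitneyDisc (N : ℝ) : Set ℂ :=
  ball ((1 - 1 / (2 * N) : ℝ) : ℂ) (1 / (8 * N))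

variable {N : ℝ} {z : ℂ}

theorem mul_one_sub_norm_mem_Ioo_of_mem_whitneyDisc (hN : 1 ≤ N) (hz : z ∈ whitneyDisc N) :
    N * (1 - ‖z‖) ∈ Ioo (3 / 8 : ℝ) (5 / 8) := by
  have : 0 < N := one_pos.trans_le hN
  have hcenter : ‖((1 - 1 / (2 * N) : ℝ) : ℂ)‖ = 1 - 1 / (2 * N) := by
    rw [Complex.norm_real, Real.norm_of_nonneg]
    rw [sub_nonneg, div_le_one (by positivity)]
    linarith
  have hdist : |‖z‖ - (1 - 1 / (2 * N))| < 1 / (8 * N) := by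
    rw [← hcenter]
    exact (abs_norm_sub_norm_le _ _).trans_lt (mem_ball_iff_norm.1 hz)
  have hscale : N * (1 / (8 * N)) = 1 / 8 ∧ N * (1 / (2 * N)) = 1 / 2 := by
    constructor <;> field_simp
  obtain ⟨hlow, hupp⟩ := abs_lt.1 hdist
  constructor <;> nlinarith

theorem whitneyDisc_subset_ball (hN : 1 ≤ N) : whitneyDisc N ⊆ ball 0 1 := fun z hz => by
  have := (mul_one_sub_norm_mem_Ioo_of_mem_whitneyDisc hN hz).1
  rw [mem_ball_zero_iff]
  nlinarith

theorem pairwise_disjoint_whitneyDisc_two_pow :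
    Pairwise (Function.onFun Disjoint fun k : ℕ => whitneyDisc (2 ^ k)) := by
  refine (pairwise_disjoint_on _).2 fun j k hjk =>
    Set.disjoint_left.2 fun z hj hk => ?_
  have hlow := (mul_one_sub_norm_mem_Ioo_of_mem_whitneyDisc (one_le_pow₀ one_le_two) hj).1
  have hupp := (mul_one_sub_norm_mem_Ioo_of_mem_whitneyDisc (one_le_pow₀ one_le_two) hk).2
  have hpow : (2 : ℝ) * 2 ^ j ≤ 2 ^ k := by
    rw [← pow_succ']
    exact pow_le_pow_right₀ one_le_two hjk
  nlinarith [show (0 : ℝ) < 2 ^ j by positivity]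

theorem rpow_neg_le_weight_of_mem_whitneyDisc (hN : 1 ≤ N) (α : ℝ) (hz : z ∈ whitneyDisc N) :
    4 ^ (-|α|) * N ^ (-α) ≤ (1 - ‖z‖ ^ 2) ^ α := by
  have hN0 : 0 < N := one_pos.trans_le hN
  obtain ⟨hlow, hupp⟩ := mul_one_sub_norm_mem_Ioo_of_mem_whitneyDisc hN hz
  have hz1 : ‖z‖ < 1 := mem_ball_zero_iff.1 (whitneyDisc_subset_ball hN hz)
  have hbound := rpow_neg_abs_le_rpow (K := 4) (x := N * (1 - ‖z‖ ^ 2)) (by norm_num)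
    (by nlinarith [norm_nonneg z]) (by nlinarith [norm_nonneg z]) α
  rw [Real.mul_rpow hN0.le (by nlinarith [norm_nonneg z])] at hbound
  rwa [Real.rpow_neg hN0.le, ← div_eq_mul_inv, div_le_iff₀' (by positivity)]

theorem mul_enorm_rpow_le_setLIntegral_whitneyDisc {p : ℝ} (hp : 1 ≤ p) (α : ℝ) {g : ℂ → ℂ}
    (hg : DifferentiableOn ℂ g (ball 0 1)) (hN : 1 ≤ N) :
    ENNReal.ofReal (4 ^ (-|α|) * (Real.pi / 64) * N ^ (-α - 2)) *
        ‖g ((1 - 1 / (2 * N) : ℝ) : ℂ)‖ₑ ^ p ≤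
      ∫⁻ z in whitneyDisc N, ENNReal.ofReal ((1 - ‖z‖ ^ 2) ^ α) * ‖g z‖ₑ ^ p := by
  have hN0 : 0 < N := one_pos.trans_le hN
  have hvol : volume (whitneyDisc N) = ENNReal.ofReal (Real.pi / 64 * N ^ (-2 : ℝ)) := by
    rw [whitneyDisc, Complex.volume_ball, ← ENNReal.ofReal_coe_nnreal, NNReal.coe_real_pi,
      ← ENNReal.ofReal_pow (by positivity), ← ENNReal.ofReal_mul (by positivity),
      Real.rpow_neg hN0.le, Real.rpow_two]
    congr 1
    field_simp
    norm_num
  calc _ = ENNReal.ofReal (4 ^ (-|α|) * N ^ (-α)) *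
        (volume (whitneyDisc N) * ‖g ((1 - 1 / (2 * N) : ℝ) : ℂ)‖ₑ ^ p) := by
        rw [hvol, ← mul_assoc, ← ENNReal.ofReal_mul (by positivity), sub_eq_add_neg,
          Real.rpow_add hN0]
        ring_nf
    _ ≤ ENNReal.ofReal (4 ^ (-|α|) * N ^ (-α)) * ∫⁻ z in whitneyDisc N, ‖g z‖ₑ ^ p := by
        gcongr
        exact volume_ball_mul_enorm_rpow_le_setLIntegral hp (hg.mono (whitneyDisc_subset_ball hN))
    _ ≤ _ := by
        rw [← lintegral_const_mul' _ _ ENNReal.ofReal_ne_top]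
        refine setLIntegral_mono' measurableSet_ball fun z hz => ?_
        gcongr
        exact rpow_neg_le_weight_of_mem_whitneyDisc hN α hz

theorem tsum_mul_enorm_rpow_le_bergmanIntegral {p : ℝ} (hp : 1 ≤ p) (α : ℝ) {g : ℂ → ℂ}
    (hg : DifferentiableOn ℂ g (ball 0 1)) :
    ∑' k : ℕ, ENNReal.ofReal (4 ^ (-|α|) * (Real.pi / 64) * (2 ^ k) ^ (-α - 2)) *
        ‖g ((1 - 1 / (2 * 2 ^ k) : ℝ) : ℂ)‖ₑ ^ p ≤ bergmanIntegral p α g := by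
  have hN (k : ℕ) : (1 : ℝ) ≤ 2 ^ k := one_le_pow₀ one_le_two
  calc _ ≤ ∑' k : ℕ, ∫⁻ z in whitneyDisc (2 ^ k),
          ENNReal.ofReal ((1 - ‖z‖ ^ 2) ^ α) * ‖g z‖ₑ ^ p :=
        ENNReal.tsum_le_tsum fun k => mul_enorm_rpow_le_setLIntegral_whitneyDisc hp α hg (hN k)
    _ = ∫⁻ z in ⋃ k : ℕ, whitneyDisc (2 ^ k), ENNReal.ofReal ((1 - ‖z‖ ^ 2) ^ α) * ‖g z‖ₑ ^ p :=
        (lintegral_iUnion (fun _ => measurableSet_ball)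
          pairwise_disjoint_whitneyDisc_two_pow _).symm
    _ ≤ bergmanIntegral p α g :=
        lintegral_mono_set (iUnion_subset fun k => whitneyDisc_subset_ball (hN k))

end WhitneyDiscs

section Necessity

variable {a : ℕ → ℝ} {g : ℂ → ℂ}

theorem sq_mul_le_norm_of_hasSum (ha : Antitone a) (h0 : ∀ n, 0 ≤ a n) {N : ℕ} (hN : 0 < N)
    (hg : ∀ z ∈ ball (0 : ℂ) 1,
      HasSum (fun n : ℕ => ((((n : ℝ) + 1) * a n : ℝ) : ℂ) * z ^ n) (g z)) :
    (N : ℝ) ^ 2 * a N / 4 ≤ ‖g ((1 - 1 / (2 * N) : ℝ) : ℂ)‖ := by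
  have hN1 : (1 : ℝ) ≤ N := mod_cast hN
  have hinv : 1 / (2 * (N : ℝ)) ≤ 1 / 2 := one_div_le_one_div_of_le two_pos (by linarith)
  have hinv0 : 0 < 1 / (2 * (N : ℝ)) := by positivity
  set r : ℝ := 1 - 1 / (2 * N) with hr
  have hr0 : 0 ≤ r := by linarith
  have hr1 : r < 1 := by linarith
  have hrN : 1 / 2 ≤ r ^ N := by
    have hbernoulli := one_add_mul_le_pow (a := -(1 / (2 * (N : ℝ)))) (by linarith) N
    have hvalue : 1 + (N : ℝ) * -(1 / (2 * (N : ℝ))) = 1 / 2 := by field_simp; norm_num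
    rwa [hvalue, ← sub_eq_add_neg, ← hr] at hbernoulli
  have hsum : HasSum (fun n : ℕ => ((n : ℝ) + 1) * a n * r ^ n) (g r).re := by
    simpa [← Complex.ofReal_pow, ← Complex.ofReal_mul] using
      Complex.hasSum_re (hg r (by simpa [abs_of_nonneg hr0] using hr1))
  have hterm (n : ℕ) : 0 ≤ ((n : ℝ) + 1) * a n * r ^ n :=
    mul_nonneg (mul_nonneg (by positivity) (h0 n)) (by positivity)
  have := h0 N
  calc (N : ℝ) ^ 2 * a N / 4 = (N : ℝ) ^ 2 * (a N * (1 / 2)) / 2 := by ring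
    _ ≤ (N : ℝ) ^ 2 * (a N * r ^ N) / 2 := by gcongr
    _ ≤ ∑ n ∈ Finset.range N, ((n : ℝ) + 1) * a n * r ^ n := by
        linarith [sq_mul_mul_pow_le_sum ha h0 hr0 hr1.le N]
    _ ≤ (g r).re := sum_le_hasSum _ (fun n _ => hterm n) hsum
    _ ≤ ‖g r‖ := Complex.re_le_norm _

theorem tsum_two_pow_rpow_mul_le_bergmanIntegral {p : ℝ} (hp : 1 ≤ p) (α : ℝ) (ha : Antitone a)
    (h0 : ∀ n, 0 ≤ a n)
    (hg : ∀ z ∈ ball (0 : ℂ) 1,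
      HasSum (fun n : ℕ => ((((n : ℝ) + 1) * a n : ℝ) : ℂ) * z ^ n) (g z)) :
    ENNReal.ofReal (4 ^ (-|α|) * (Real.pi / 64) * (1 / 4) ^ p) *
        ∑' k : ℕ, ENNReal.ofReal ((2 ^ k) ^ (2 * p - α - 2) * a (2 ^ k) ^ p) ≤
      bergmanIntegral p α g := by
  have := Real.pi_pos
  refine le_trans ?_
    (tsum_mul_enorm_rpow_le_bergmanIntegral hp α (differentiableOn_of_hasSum_pow hg))
  rw [← ENNReal.tsum_mul_left]
  refine ENNReal.tsum_le_tsum fun k => ?_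
  have hak := h0 (2 ^ k)
  have hlow : ENNReal.ofReal ((2 ^ k) ^ 2 * a (2 ^ k) / 4) ≤
      ‖g ((1 - 1 / (2 * 2 ^ k) : ℝ) : ℂ)‖ₑ := by
    rw [← ofReal_norm]
    exact ENNReal.ofReal_le_ofReal
      (mod_cast sq_mul_le_norm_of_hasSum ha h0 (Nat.two_pow_pos k) hg)
  refine le_trans (le_of_eq ?_) (mul_le_mul_right (ENNReal.rpow_le_rpow hlow (by linarith)) _)
  set N : ℝ := 2 ^ k
  have hN : 0 < N := by positivity
  have hpow : (N ^ 2 * a (2 ^ k) / 4) ^ p = (1 / 4) ^ p * (N ^ (2 * p) * a (2 ^ k) ^ p) := by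
    rw [div_eq_mul_one_div, mul_comm, Real.mul_rpow (by positivity) (by positivity),
      Real.mul_rpow (by positivity) hak, Real.rpow_mul hN.le, Real.rpow_two]
  have hexp : N ^ (2 * p - α - 2) = N ^ (-α - 2) * N ^ (2 * p) := by
    rw [← Real.rpow_add hN]
    ring_nf
  rw [ENNReal.ofReal_rpow_of_nonneg (by positivity) (by linarith), hpow, hexp,
    ← ENNReal.ofReal_mul (by positivity), ← ENNReal.ofReal_mul (by positivity)]
  ring_nf

end Necessity

section Characterization

variable {p α : ℝ} {a : ℕ → ℝ} {f g : ℂ → ℂ}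

theorem bergmanIntegral_lt_top_iff_summable (hp : 1 < p) (hα : -1 < α) (ha : Antitone a)
    (h0 : ∀ n, 0 ≤ a n)
    (hg : ∀ z ∈ ball (0 : ℂ) 1,
      HasSum (fun n : ℕ => ((((n : ℝ) + 1) * a n : ℝ) : ℂ) * z ^ n) (g z)) :
    bergmanIntegral p α g < ⊤ ↔
      Summable fun n : ℕ => ((n : ℝ) + 1) ^ (2 * p - α - 3) * a n ^ p := by
  have hterm (n : ℕ) : 0 ≤ ((n : ℝ) + 1) ^ (2 * p - α - 3) * a n ^ p :=
    mul_nonneg (by positivity) (Real.rpow_nonneg (h0 n) p)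
  constructor <;> intro h
  · have hconst : 0 < 4 ^ (-|α|) * (Real.pi / 64) * (1 / 4) ^ p := by
      have := Real.pi_pos
      positivity
    have hdyadic :
        ∑' k : ℕ, ENNReal.ofReal ((2 ^ k) ^ (2 * p - α - 3 + 1) * a (2 ^ k) ^ p) < ⊤ := by
      rw [show 2 * p - α - 3 + 1 = 2 * p - α - 2 by ring]
      exact ENNReal.lt_top_of_mul_ne_top_right
        ((tsum_two_pow_rpow_mul_le_bergmanIntegral hp.le α ha h0 hg).trans_lt h).ne
        (ENNReal.ofReal_pos.2 hconst).ne'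
    have hfinite := (tsum_add_one_rpow_mul_rpow_le (by linarith) (2 * p - α - 3) ha h0).trans_lt
      (ENNReal.add_lt_top.2
        ⟨ENNReal.ofReal_lt_top, ENNReal.mul_lt_top ENNReal.ofReal_lt_top hdyadic⟩)
    exact (ENNReal.summable_toReal hfinite.ne).congr fun n => ENNReal.toReal_ofReal (hterm n)
  · obtain ⟨C, hC, hbound⟩ := exists_bergmanIntegral_tsum_le hp hα
    calc bergmanIntegral p α g
        = bergmanIntegral p α (fun z => ∑' n : ℕ, ((((n : ℝ) + 1) * a n : ℝ) : ℂ) * z ^ n) :=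
          setLIntegral_congr_fun measurableSet_ball fun z hz => by
            simp only [(hg z hz).tsum_eq]
      _ ≤ C * ∑' n : ℕ, ENNReal.ofReal (((n : ℝ) + 1) ^ (2 * p - α - 3) * a n ^ p) :=
          hbound a ha h0
      _ < ⊤ := ENNReal.mul_lt_top hC.lt_top h.tsum_ofReal_lt_top

theorem bergmanNorm_lt_top_iff (hp : 0 < p) (hα : -1 < α) :
    bergmanNorm p α f < ⊤ ↔ bergmanIntegral p α f < ⊤ := by
  have hintegral : ∫⁻ z in ball (0 : ℂ) 1, ENNReal.ofReal ((1 - ‖z‖ ^ 2) ^ α * ‖f z‖ ^ p) =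
      bergmanIntegral p α f := by
    refine setLIntegral_congr_fun measurableSet_ball fun z hz => ?_
    have hweight : 0 ≤ 1 - ‖z‖ ^ 2 := by
      nlinarith [norm_nonneg z, mem_ball_zero_iff.1 hz]
    simp only [ENNReal.ofReal_mul (Real.rpow_nonneg hweight α), ← ofReal_norm,
      ENNReal.ofReal_rpow_of_nonneg (norm_nonneg _) hp.le]
  have hα0 : ENNReal.ofReal (α + 1) ≠ 0 := (ENNReal.ofReal_pos.2 (by linarith)).ne'
  have hpi0 : ENNReal.ofReal Real.pi ≠ 0 := (ENNReal.ofReal_pos.2 Real.pi_pos).ne'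
  rw [bergmanNorm, ENNReal.rpow_lt_top_iff_of_pos (by positivity), dA, Measure.restrict_smul,
    lintegral_smul_measure, hintegral, smul_eq_mul, ← mul_assoc]
  simp +contextual [ENNReal.mul_lt_top_iff, hα0, hpi0, pos_iff_ne_zero]

theorem dirichletNorm_lt_top_iff (hp : 0 < p) (hα : -1 < α) :
    dirichletNorm p α f < ⊤ ↔ bergmanIntegral p α (deriv f) < ⊤ := by
  simp [dirichletNorm, bergmanNorm_lt_top_iff hp hα]

end Characterization

theorem Dpa_decreasing_coefficients_general (p α : ℝ) (hp : 1 < p) (hα : -1 < α)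
    (f : ℂ → ℂ) (a : ℕ → ℝ) (hpos : ∀ n, 0 ≤ a n) (hdec : ∀ n, a (n + 1) ≤ a n)
    (hf : ∀ z ∈ ball (0 : ℂ) 1, HasSum (fun n : ℕ => (a n : ℂ) * z ^ n) (f z)) :
    dirichletNorm p α f < ⊤ ↔
      Summable (fun n : ℕ => ((n : ℝ) + 1) ^ (2 * p - α - 3) * a n ^ p) := by
  have hderiv : ∀ z ∈ ball (0 : ℂ) 1,
      HasSum (fun n : ℕ => ((((n : ℝ) + 1) * a (n + 1) : ℝ) : ℂ) * z ^ n) (deriv f z) :=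
    fun z hz => by simpa using hasSum_deriv_of_hasSum_pow hf hz
  calc dirichletNorm p α f < ⊤
      ↔ bergmanIntegral p α (deriv f) < ⊤ := dirichletNorm_lt_top_iff (by linarith) hα
    _ ↔ Summable (fun n : ℕ => ((n : ℝ) + 1) ^ (2 * p - α - 3) * a (n + 1) ^ p) :=
        bergmanIntegral_lt_top_iff_summable hp hα (antitone_nat_of_succ_le fun n => hdec (n + 1))
          (fun n => hpos (n + 1)) hderiv
    _ ↔ _ := summable_add_one_rpow_mul_succ_iff _ fun n => Real.rpow_nonneg (hpos n) p

/-- For `1 < p < ∞`, `p-2 < α ≤ p-1` and `f(z) = ∑ a_n z^n` with `{a_n}`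
a decreasing sequence of non-negative reals: `f ∈ 𝒟^p_α` iff
`∑_{n≥0} (n+1)^{2p-α-3} a_n^p < ∞`. -/
theorem Dpa_decreasing_coefficients (p α : ℝ) (hp : 1 < p)
    (hα1 : p - 2 < α) (hα2 : α ≤ p - 1)
    (f : ℂ → ℂ) (a : ℕ → ℝ) (hpos : ∀ n, 0 ≤ a n) (hdec : ∀ n, a (n + 1) ≤ a n)
    (hf : ∀ z ∈ ball (0 : ℂ) 1, HasSum (fun n : ℕ => (a n : ℂ) * z ^ n) (f z)) :
    dirichletNorm p α f < ⊤ ↔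
      Summable (fun n : ℕ => ((n : ℝ) + 1) ^ (2 * p - α - 3) * a n ^ p) := by
  exact Dpa_decreasing_coefficients_general p α hp (by linarith) f a hpos hdec hf
end

section
/- Let −1 < α < 0 and let μ be a finite positive Borel measure on [0,1) which is a Carleson measure. Then there exists a constant C > 0 such that for every f in the Dirichlet-type space 𝒟^1_α, the integral I_μ f(z) = ∫_{[0,1)} f(t)/(1 − t z) dμ(t) converges absolutely for every z in the unit disc 𝔻, the resulting function I_μ f is analytic in 𝔻, belongs to 𝒟^1_α, and ‖I_μ f‖_{𝒟^1_α} ≤ C ‖f‖_{𝒟^1_α}. -/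
open MeasureTheory Set Metric Filter Asymptotics
open scoped ENNReal

/-!
A Carleson measure assigns no more mass to `[t, 1)` than a multiple of Lebesgue measure does, so
the integral of a nondecreasing nonnegative function on `[0, 1)` against it is at most that
multiple of its Lebesgue integral. Apply this to `(|f(0)| + ∫₀ᵗ |f'(s)| ds) (1 - t)^α`, which is
nondecreasing as `α < 0` and dominates `|f(t)| (1 - t)^α`: by Tonelli, `∫ |f(t)| (1 - t)^α dμ(t)`
is controlled by `|f(0)|` and the radial integral `∫₀¹ |f'(s)| (1 - s)^(α + 1) ds`. Averaging
`|f'|` over discs of radius `(1 - s) / 2` around the points `s` bounds the radial integral by the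
`A^1_α` norm of `f'`.

On the other side, `|(I_μ f)'(z)| ≤ ∫ |f(t)| |1 - tz|⁻² dμ(t)`, and the Forelli–Rudin estimate
`∫ |1 - tz|⁻² dA_α(z) ≲ (1 - t)^α` bounds the `A^1_α` norm of `(I_μ f)'` by the same integral
`∫ |f(t)| (1 - t)^α dμ(t)`.
-/

section MonotoneDomination

lemma measure_le_of_forall_Ico_subset {μ ν : Measure ℝ} [NullSingletonClass ν] {a b : ℝ}
    (h : ∀ t ∈ Ico a b, μ (Ico t b) ≤ ν (Ico t b)) {s : Set ℝ} (hs : s ⊆ Ico a b)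
    (hup : ∀ x ∈ s, Ico x b ⊆ s) : μ s ≤ ν s := by
  rcases s.eq_empty_or_nonempty with rfl | hne
  · simp
  have hbdd : BddBelow s := ⟨a, fun x hx => (hs hx).1⟩
  have hinf : sInf s ∈ Ico a b := by
    obtain ⟨x, hx⟩ := hne
    exact ⟨le_csInf ⟨x, hx⟩ fun y hy => (hs hy).1, (csInf_le hbdd hx).trans_lt (hs hx).2⟩
  have hIoo : Ioo (sInf s) b ⊆ s := by
    intro y hy
    obtain ⟨x, hx, hxy⟩ := exists_lt_of_csInf_lt hne hy.1
    exact hup x hx ⟨hxy.le, hy.2⟩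
  calc μ s ≤ μ (Ico (sInf s) b) := measure_mono fun x hx => ⟨csInf_le hbdd hx, (hs hx).2⟩
    _ ≤ ν (Ico (sInf s) b) := h _ hinf
    _ = ν (Ioo (sInf s) b) := (measure_congr Ioo_ae_eq_Ico).symm
    _ ≤ ν s := measure_mono hIoo

lemma lintegral_le_lintegral_of_meas_lt_le {X : Type*} [MeasurableSpace X] {μ ν : Measure X}
    {f : X → ℝ≥0∞} (hμ : AEMeasurable f μ) (hν : AEMeasurable f ν)
    (h : ∀ c : ℝ≥0∞, μ {x | c < f x} ≤ ν {x | c < f x}) :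
    ∫⁻ x, f x ∂μ ≤ ∫⁻ x, f x ∂ν := by
  have htrunc (n : ℕ) : ∫⁻ x, min (f x) n ∂μ ≤ ∫⁻ x, min (f x) n ∂ν := by
    have hfin (x : X) : min (f x) n ≠ ⊤ :=
      ((min_le_right _ _).trans_lt (ENNReal.natCast_lt_top n)).ne
    have hlayer {ρ : Measure X} (hρ : AEMeasurable f ρ) : ∫⁻ x, min (f x) n ∂ρ =
        ∫⁻ t in Ioi (0 : ℝ), ρ {x | t < (min (f x) n).toReal} := by
      rw [← lintegral_eq_lintegral_meas_lt ρ (.of_forall fun _ => ENNReal.toReal_nonneg)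
        (hρ.min aemeasurable_const).ennreal_toReal]
      simp only [ENNReal.ofReal_toReal (hfin _)]
    rw [hlayer hμ, hlayer hν]
    refine setLIntegral_mono' measurableSet_Ioi fun t ht => ?_
    simp only [← ENNReal.ofReal_lt_iff_lt_toReal (le_of_lt ht) (hfin _), lt_min_iff]
    by_cases htn : ENNReal.ofReal t < n
    · simpa only [htn, and_true] using h (ENNReal.ofReal t)
    · simp [htn]
  have hsup (x : X) : f x = ⨆ n : ℕ, min (f x) n := by
    rw [← inf_iSup_eq, ENNReal.iSup_natCast, inf_top_eq]
  have hmono (x : X) : Monotone fun n : ℕ => min (f x) n := fun m n hmn =>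
    min_le_min_left _ (Nat.cast_le.2 hmn)
  rw [lintegral_congr hsup, lintegral_congr (μ := ν) hsup,
    lintegral_iSup' (fun n => hμ.min aemeasurable_const) (.of_forall hmono),
    lintegral_iSup' (fun n => hν.min aemeasurable_const) (.of_forall hmono)]
  exact iSup_mono htrunc

lemma setLIntegral_Ico_le_of_monotoneOn {μ ν : Measure ℝ} [NullSingletonClass ν] {a b : ℝ}
    (h : ∀ t ∈ Ico a b, μ (Ico t b) ≤ ν (Ico t b)) {g : ℝ → ℝ≥0∞} (hg : MonotoneOn g (Ico a b)) :
    ∫⁻ t in Ico a b, g t ∂μ ≤ ∫⁻ t in Ico a b, g t ∂ν := by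
  refine lintegral_le_lintegral_of_meas_lt_le
    (aemeasurable_restrict_of_monotoneOn measurableSet_Ico hg)
    (aemeasurable_restrict_of_monotoneOn measurableSet_Ico hg) fun c => ?_
  rw [Measure.restrict_apply' measurableSet_Ico, Measure.restrict_apply' measurableSet_Ico]
  refine measure_le_of_forall_Ico_subset h inter_subset_right fun x hx y hy => ?_
  have hy' : y ∈ Ico a b := ⟨hx.2.1.trans hy.1, hy.2⟩
  exact ⟨hx.1.trans_le (hg hx.2 hy' hy.1), hy'⟩

lemma setLIntegral_Ico_lintegral_Ioc_mul {μ ν : Measure ℝ} [SFinite μ] [SFinite ν] {h w : ℝ → ℝ≥0∞}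
    (hh : Measurable h) (hw : Measurable w) (a b : ℝ) :
    ∫⁻ t in Ico a b, (∫⁻ s in Ioc a t, h s ∂ν) * w t ∂μ =
      ∫⁻ s in Ioo a b, h s * ∫⁻ t in Ico s b, w t ∂μ ∂ν := by
  have hinner : ∀ t ∈ Ico a b, (∫⁻ s in Ioc a t, h s ∂ν) * w t =
      ∫⁻ s in Ioo a b, (Iic t).indicator (fun s => h s * w t) s ∂ν := fun t ht => by
    rw [← lintegral_mul_const _ hh, setLIntegral_indicator measurableSet_Iic]
    congr 2
    ext s
    exact ⟨fun hs => ⟨hs.2, hs.1, hs.2.trans_lt ht.2⟩, fun hs => ⟨hs.2.1, hs.1⟩⟩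
  have houter : ∀ s ∈ Ioo a b, h s * ∫⁻ t in Ico s b, w t ∂μ =
      ∫⁻ t in Ico a b, (Iic t).indicator (fun s => h s * w t) s ∂μ := fun s hs => by
    rw [← lintegral_const_mul _ hw,
      show Ico s b = Ici s ∩ Ico a b from Set.ext fun t =>
        ⟨fun ht => ⟨ht.1, hs.1.le.trans ht.1, ht.2⟩, fun ht => ⟨ht.1, ht.2.2⟩⟩,
      ← setLIntegral_indicator measurableSet_Ici]
    simp only [indicator_apply, mem_Ici, mem_Iic]
  rw [setLIntegral_congr_fun measurableSet_Ico hinner,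
    setLIntegral_congr_fun measurableSet_Ioo houter]
  refine lintegral_lintegral_swap (Measurable.aemeasurable ?_)
  have hmeas : Measurable ({p : ℝ × ℝ | p.2 ≤ p.1}.indicator fun p => h p.2 * w p.1) :=
    Measurable.indicator (by fun_prop) (measurableSet_le measurable_snd measurable_fst)
  exact hmeas

end MonotoneDomination

section RpowIntegrals

lemma setLIntegral_Ico_one_sub_rpow {r s : ℝ} (hr : -1 < r) (hs : s ≤ 1) :
    ∫⁻ u in Ico s 1, ENNReal.ofReal ((1 - u) ^ r) =
      ENNReal.ofReal ((1 - s) ^ (r + 1) / (r + 1)) := by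
  have hint : IntervalIntegrable (fun u : ℝ => (1 - u) ^ r) volume s 1 := by
    simpa using (intervalIntegral.intervalIntegrable_rpow' (a := 1 - s) (b := 0) hr).comp_sub_left 1
  rw [restrict_Ico_eq_restrict_Ioc, ← ofReal_integral_eq_lintegral_ofReal
      ((intervalIntegrable_iff_integrableOn_Ioc_of_le hs).1 hint),
    ← intervalIntegral.integral_of_le hs,
    intervalIntegral.integral_comp_sub_left (fun x => x ^ r) 1, integral_rpow (Or.inl hr),
    sub_self, Real.zero_rpow (by linarith), sub_zero]
  filter_upwards [ae_restrict_mem measurableSet_Ioc] with u hu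
  exact Real.rpow_nonneg (by linarith [hu.2]) _

lemma setLIntegral_Ioc_one_sub_rpow {r s t : ℝ} (hr : r ≠ -1) (hst : s ≤ t) (ht : t < 1) :
    ∫⁻ u in Ioc s t, ENNReal.ofReal ((1 - u) ^ r) =
      ENNReal.ofReal (((1 - s) ^ (r + 1) - (1 - t) ^ (r + 1)) / (r + 1)) := by
  have hzero : (0 : ℝ) ∉ uIcc (1 - t) (1 - s) := by
    rw [uIcc_of_le (by linarith)]
    exact fun h => by linarith [h.1]
  have hint : IntervalIntegrable (fun u : ℝ => (1 - u) ^ r) volume s t := by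
    simpa using (intervalIntegral.intervalIntegrable_rpow (μ := volume) (a := 1 - s) (b := 1 - t)
      (r := r) (Or.inr (by rwa [uIcc_comm]))).comp_sub_left 1
  rw [← ofReal_integral_eq_lintegral_ofReal
      ((intervalIntegrable_iff_integrableOn_Ioc_of_le hst).1 hint),
    ← intervalIntegral.integral_of_le hst,
    intervalIntegral.integral_comp_sub_left (fun x => x ^ r) 1,
    integral_rpow (Or.inr ⟨hr, hzero⟩)]
  filter_upwards [ae_restrict_mem measurableSet_Ioc] with u hu
  exact Real.rpow_nonneg (by linarith [hu.2]) _

lemma setLIntegral_one_sub_rpow_div_le {α ρ : ℝ} (hα1 : -1 < α) (hα2 : α < 0) (h0 : 0 ≤ ρ)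
    (h1 : ρ < 1) :
    ∫⁻ r in Ioo (0 : ℝ) 1, ENNReal.ofReal ((1 - r) ^ α / (1 - ρ * r)) ≤
      ENNReal.ofReal ((1 - ρ) ^ α / (-α * (α + 1))) := by
  have hα0 : 0 < -α := by linarith
  have hα3 : 0 < α + 1 := by linarith
  have hρ : 0 < 1 - ρ := by linarith
  have hleft : ∫⁻ r in Ioc 0 ρ, ENNReal.ofReal ((1 - r) ^ α / (1 - ρ * r)) ≤
      ENNReal.ofReal ((1 - ρ) ^ α / -α) := calc
    _ ≤ ∫⁻ r in Ioc 0 ρ, ENNReal.ofReal ((1 - r) ^ (α - 1)) := by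
      refine setLIntegral_mono' measurableSet_Ioc fun r hr => ENNReal.ofReal_le_ofReal ?_
      have hr1 : 0 < 1 - r := by linarith [hr.2]
      rw [Real.rpow_sub_one hr1.ne']
      gcongr
      nlinarith [hr.1]
    _ ≤ _ := by
      rw [setLIntegral_Ioc_one_sub_rpow (by linarith) h0 h1, sub_add_cancel, sub_zero,
        Real.one_rpow, ← neg_div_neg_eq, neg_sub]
      gcongr
      linarith
  have hright : ∫⁻ r in Ico ρ 1, ENNReal.ofReal ((1 - r) ^ α / (1 - ρ * r)) ≤
      ENNReal.ofReal ((1 - ρ) ^ α / (α + 1)) := calc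
    _ ≤ ∫⁻ r in Ico ρ 1, ENNReal.ofReal ((1 - r) ^ α) * ENNReal.ofReal (1 - ρ)⁻¹ := by
      refine setLIntegral_mono' measurableSet_Ico fun r hr => ?_
      have hr1 : 0 < 1 - r := by linarith [hr.2]
      rw [← ENNReal.ofReal_mul (by positivity), ← div_eq_mul_inv]
      gcongr
      nlinarith [hr.1]
    _ = _ := by
      rw [lintegral_mul_const _ (by fun_prop), setLIntegral_Ico_one_sub_rpow hα1 h1.le,
        ← ENNReal.ofReal_mul (by positivity), Real.rpow_add_one hρ.ne']
      congr 1
      field_simp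
  have hcover : Ioo (0 : ℝ) 1 ⊆ Ioc 0 ρ ∪ Ico ρ 1 := fun x hx =>
    (le_total x ρ).imp (fun h => ⟨hx.1, h⟩) fun h => ⟨h, hx.2⟩
  calc _ ≤ _ := (lintegral_mono_set hcover).trans (lintegral_union_le _ _ _)
    _ ≤ _ := add_le_add hleft hright
    _ = ENNReal.ofReal ((1 - ρ) ^ α / (-α * (α + 1))) := by
      rw [← ENNReal.ofReal_add (by positivity) (by positivity)]
      congr 1
      have hαne : α ≠ 0 := hα2.ne
      field_simp
      ring

end RpowIntegrals

section PolarCoordinates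

lemma lintegral_circleMap_indicator_ball (F : ℂ → ℝ≥0∞) (c : ℂ) (R : ℝ) {r : ℝ} (hr : 0 ≤ r) :
    ∫⁻ θ in Ioo (-Real.pi) Real.pi, (ball c R).indicator F (circleMap c r θ) =
      (Iio R).indicator (fun r => ∫⁻ θ in Ioo (-Real.pi) Real.pi, F (circleMap c r θ)) r := by
  have hmem (θ : ℝ) : circleMap c r θ ∈ ball c R ↔ r < R := by
    simp [circleMap, abs_of_nonneg hr]
  by_cases hrR : r < R <;> simp [indicator, hmem, hrR]

lemma setLIntegral_ball_eq_polar {F : ℂ → ℝ≥0∞} {c : ℂ} {R : ℝ}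
    (hF : Measurable ((ball c R).indicator F)) :
    ∫⁻ z in ball c R, F z = ∫⁻ r in Ioo (0 : ℝ) R, ENNReal.ofReal r *
      ∫⁻ θ in Ioo (-Real.pi) Real.pi, F (circleMap c r θ) := by
  have hpolar (r θ : ℝ) : Complex.polarCoord.symm (r, θ) + c = circleMap c r θ := by
    rw [Complex.polarCoord_symm_apply, circleMap, Complex.exp_mul_I, add_comm]
    push_cast
    rfl
  have hmeas : Measurable fun p : ℝ × ℝ =>
      ENNReal.ofReal p.1 • (ball c R).indicator F (Complex.polarCoord.symm p + c) := by
    refine Measurable.mul (by fun_prop) (hF.comp ?_)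
    simp only [Complex.polarCoord_symm_apply]
    fun_prop
  calc ∫⁻ z in ball c R, F z = ∫⁻ z, (ball c R).indicator F (z + c) := by
        rw [lintegral_add_right_eq_self _ c, lintegral_indicator measurableSet_ball]
    _ = ∫⁻ r in Ioi (0 : ℝ), ENNReal.ofReal r *
          ∫⁻ θ in Ioo (-Real.pi) Real.pi, (ball c R).indicator F (circleMap c r θ) := by
        rw [← Complex.lintegral_comp_polarCoord_symm, polarCoord_target, Measure.volume_eq_prod,
          setLIntegral_prod _ hmeas.aemeasurable]
        refine lintegral_congr fun r => ?_
        simp only [hpolar, smul_eq_mul]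
        exact lintegral_const_mul _ (hF.comp (continuous_circleMap c r).measurable)
    _ = ∫⁻ r in Ioi (0 : ℝ), (Iio R).indicator (fun r => ENNReal.ofReal r *
          ∫⁻ θ in Ioo (-Real.pi) Real.pi, F (circleMap c r θ)) r := by
        refine setLIntegral_congr_fun measurableSet_Ioi fun r (hr : 0 < r) => ?_
        simp only [lintegral_circleMap_indicator_ball F c R hr.le, indicator_apply, mul_ite,
          mul_zero]
    _ = _ := by
        rw [setLIntegral_indicator measurableSet_Iio, inter_comm, Ioi_inter_Iio]

lemma setLIntegral_ball_dA_eq_polar {F : ℂ → ℝ≥0∞} {c : ℂ} {R : ℝ}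
    (hF : Measurable ((ball c R).indicator F)) :
    ∫⁻ z in ball c R, F z ∂dA = ∫⁻ r in Ioo (0 : ℝ) R, ENNReal.ofReal (r / Real.pi) *
      ∫⁻ θ in Ioo (-Real.pi) Real.pi, F (circleMap c r θ) := by
  rw [dA, Measure.restrict_smul, lintegral_smul_measure, setLIntegral_ball_eq_polar hF, smul_eq_mul,
    ← lintegral_const_mul' _ _ (by simp [Real.pi_pos])]
  refine setLIntegral_congr_fun measurableSet_Ioo fun r _ => ?_
  simp only [div_eq_inv_mul, ENNReal.ofReal_mul (inv_nonneg.2 Real.pi_pos.le),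
    ENNReal.ofReal_inv_of_pos Real.pi_pos, mul_assoc]

lemma setIntegral_circleMap_eq_circleAverage {E : Type*} [NormedAddCommGroup E] [NormedSpace ℝ E]
    (f : ℂ → E) (c : ℂ) (r : ℝ) :
    ∫ θ in Ioo (-Real.pi) Real.pi, f (circleMap c r θ) =
      (2 * Real.pi) • Real.circleAverage f c r := by
  have hper : (fun θ => f (circleMap c r θ)).Periodic (2 * Real.pi) :=
    fun θ => by simp only [periodic_circleMap c r θ]
  rw [Real.circleAverage, smul_smul, mul_inv_cancel₀ (by positivity), one_smul,
    ← restrict_Ioo_eq_restrict_Ioc.symm,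
    ← intervalIntegral.integral_of_le (by linarith [Real.pi_pos])]
  simpa [two_mul] using hper.intervalIntegral_add_eq (-Real.pi) 0

end PolarCoordinates

section CircleAverages

lemma circleAverage_one_div_norm_one_sub_mul_sq {w : ℂ} (hw : ‖w‖ < 1) :
    Real.circleAverage (fun z => 1 / ‖1 - w * z‖ ^ 2) 0 1 = 1 / (1 - ‖w‖ ^ 2) := by
  have hpos : 0 < 1 - ‖w‖ ^ 2 := by nlinarith [norm_nonneg w]
  have hkernel : EqOn (fun z => 1 / ‖1 - w * z‖ ^ 2)
      ((1 - ‖w‖ ^ 2)⁻¹ • poissonKernel 0 (starRingEnd ℂ w)) (sphere 0 |1|) := by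
    intro z hz
    have hz1 : ‖z‖ = 1 := by simpa using hz
    have hconj : 1 - w * z = z * starRingEnd ℂ (z - starRingEnd ℂ w) := by
      rw [map_sub, Complex.conj_conj, mul_sub, Complex.mul_conj, Complex.normSq_eq_norm_sq, hz1]
      push_cast
      ring
    simp only [Pi.smul_apply, poissonKernel_def, sub_zero, hz1, Complex.norm_conj, hconj, norm_mul,
      smul_eq_mul, one_mul, one_pow]
    field_simp
  have hpoisson := (InnerProductSpace.harmonicContOnCl_const
    (c := (1 : ℝ))).circleAverage_poissonKernel_smul
    (c := 0) (R := 1) (w := starRingEnd ℂ w) (by simpa using hw)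
  have hone : (poissonKernel 0 (starRingEnd ℂ w) • fun _ => (1 : ℝ)) =
      poissonKernel 0 (starRingEnd ℂ w) := by ext; simp
  rw [Real.circleAverage_congr_sphere hkernel, Real.circleAverage_smul, ← hone, hpoisson,
    smul_eq_mul, mul_one, one_div]

lemma lintegral_one_div_norm_one_sub_mul_circleMap_sq {w : ℂ} {r : ℝ} (hr : 0 ≤ r)
    (hwr : ‖w‖ * r < 1) :
    ∫⁻ θ in Ioo (-Real.pi) Real.pi, ENNReal.ofReal (1 / ‖1 - w * circleMap 0 r θ‖ ^ 2) =
      ENNReal.ofReal (2 * Real.pi / (1 - (‖w‖ * r) ^ 2)) := by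
  have hnorm : ‖w * r‖ = ‖w‖ * r := by simp [abs_of_nonneg hr]
  have hrescale (θ : ℝ) : w * circleMap 0 r θ = w * r * circleMap 0 1 θ := by
    simp [circleMap, mul_assoc]
  have hne (θ : ℝ) : ‖1 - w * r * circleMap 0 1 θ‖ ^ 2 ≠ 0 := by
    refine pow_ne_zero 2 (norm_ne_zero_iff.2 fun h => hwr.ne ?_)
    simpa [abs_of_nonneg hr] using congrArg norm (sub_eq_zero.1 h).symm
  have hcont : Continuous fun θ : ℝ => 1 / ‖1 - w * r * circleMap 0 1 θ‖ ^ 2 :=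
    continuous_const.div (by fun_prop) hne
  simp only [hrescale]
  rw [← ofReal_integral_eq_lintegral_ofReal
      (hcont.integrableOn_Icc.mono_set Ioo_subset_Icc_self) (.of_forall fun θ => by positivity),
    setIntegral_circleMap_eq_circleAverage (fun z => 1 / ‖1 - w * r * z‖ ^ 2),
    circleAverage_one_div_norm_one_sub_mul_sq (hnorm.trans_lt hwr), smul_eq_mul, mul_one_div, hnorm]

end CircleAverages

section MeanValue

variable {E : Type*} [NormedAddCommGroup E] [NormedSpace ℂ E] [CompleteSpace E] {g : ℂ → E}
  {c : ℂ} {r R : ℝ}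

lemma ofReal_two_pi_mul_enorm_le_lintegral_circleMap (hg : DifferentiableOn ℂ g (ball c R))
    (hr : 0 ≤ r) (hrR : r < R) :
    ENNReal.ofReal (2 * Real.pi) * ‖g c‖ₑ ≤
      ∫⁻ θ in Ioo (-Real.pi) Real.pi, ‖g (circleMap c r θ)‖ₑ := by
  have hclosed : closedBall c |r| ⊆ ball c R := by
    rw [abs_of_nonneg hr]
    exact closedBall_subset_ball hrR
  have hdiff : DiffContOnCl ℂ g (ball c |r|) :=
    (hg.mono (closure_ball_subset_closedBall.trans hclosed)).diffContOnCl
  calc _ = ‖∫ θ in Ioo (-Real.pi) Real.pi, g (circleMap c r θ)‖ₑ := by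
        rw [setIntegral_circleMap_eq_circleAverage, hdiff.circleAverage, enorm_smul,
          Real.enorm_eq_ofReal (by positivity)]
    _ ≤ _ := enorm_integral_le_lintegral_enorm _

lemma ofReal_sq_mul_enorm_le_setLIntegral_ball_dA (hg : DifferentiableOn ℂ g (ball c R))
    (hR : 0 ≤ R) : ENNReal.ofReal (R ^ 2) * ‖g c‖ₑ ≤ ∫⁻ z in ball c R, ‖g z‖ₑ ∂dA := by
  classical
  have hmeas : Measurable ((ball c R).indicator fun z => ‖g z‖ₑ) := by
    rw [← piecewise_eq_indicator]
    exact hg.continuousOn.enorm.measurable_piecewise continuousOn_const measurableSet_ball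
  have hradial : ∫⁻ r in Ioo (0 : ℝ) R, ENNReal.ofReal (2 * r) = ENNReal.ofReal (R ^ 2) := by
    rw [← ofReal_integral_eq_lintegral_ofReal, ← restrict_Ioo_eq_restrict_Ioc.symm,
      ← intervalIntegral.integral_of_le hR, intervalIntegral.integral_const_mul, integral_id]
    · congr 1
      ring
    · exact (Continuous.integrableOn_Icc (by fun_prop)).mono_set Ioo_subset_Icc_self
    · filter_upwards [ae_restrict_mem measurableSet_Ioo] with r hr
      exact mul_nonneg zero_le_two hr.1.le
  rw [setLIntegral_ball_dA_eq_polar hmeas, ← hradial, ← lintegral_mul_const _ (by fun_prop)]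
  refine setLIntegral_mono' measurableSet_Ioo fun r hr => ?_
  calc ENNReal.ofReal (2 * r) * ‖g c‖ₑ
      = ENNReal.ofReal (r / Real.pi) * (ENNReal.ofReal (2 * Real.pi) * ‖g c‖ₑ) := by
        rw [← mul_assoc, ← ENNReal.ofReal_mul (div_nonneg hr.1.le Real.pi_pos.le)]
        congr 2
        field_simp
    _ ≤ _ := by
        gcongr
        exact ofReal_two_pi_mul_enorm_le_lintegral_circleMap hg hr.1.le hr.2

end MeanValue

section WeightedArea

/-- The measure `dA_α = (α + 1) (1 - |z|²)^α dA` on the unit disc, so that the Bergman space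
`A^p_α` consists of the analytic functions in `L^p(dA_α)`. -/
noncomputable def weightedArea (α : ℝ) : Measure ℂ :=
  (dA.restrict (ball 0 1)).withDensity fun z => ENNReal.ofReal ((α + 1) * (1 - ‖z‖ ^ 2) ^ α)

instance : SFinite dA := by unfold dA; infer_instance

instance (α : ℝ) : SFinite (weightedArea α) := by unfold weightedArea; infer_instance

lemma ae_norm_lt_one_weightedArea (α : ℝ) : ∀ᵐ z ∂weightedArea α, ‖z‖ < 1 :=
  (withDensity_absolutelyContinuous _ _).ae_le <| by
    filter_upwards [ae_restrict_mem measurableSet_ball] with z hz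
    simpa using hz

lemma setLIntegral_weightedArea (α : ℝ) (F : ℂ → ℝ≥0∞) {s : Set ℂ} (hs : MeasurableSet s)
    (hsub : s ⊆ ball 0 1) :
    ∫⁻ z in s, F z ∂weightedArea α =
      ∫⁻ z in s, ENNReal.ofReal ((α + 1) * (1 - ‖z‖ ^ 2) ^ α) * F z ∂dA := by
  rw [weightedArea, setLIntegral_withDensity_eq_setLIntegral_mul_non_measurable _ (by fun_prop) _ hs
    (.of_forall fun _ => ENNReal.ofReal_lt_top), Measure.restrict_restrict hs,
    inter_eq_left.2 hsub]
  rfl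

lemma lintegral_weightedArea (α : ℝ) (F : ℂ → ℝ≥0∞) :
    ∫⁻ z, F z ∂weightedArea α =
      ∫⁻ z in ball 0 1, ENNReal.ofReal ((α + 1) * (1 - ‖z‖ ^ 2) ^ α) * F z ∂dA := by
  have hball : ∀ᵐ z ∂weightedArea α, z ∈ ball (0 : ℂ) 1 := by
    simpa using ae_norm_lt_one_weightedArea α
  rw [← setLIntegral_weightedArea α F measurableSet_ball subset_rfl,
    Measure.restrict_eq_self_of_ae_mem hball]

lemma bergmanNorm_eq_eLpNorm {p α : ℝ} (hp : 0 < p) (hα : -1 ≤ α) (f : ℂ → ℂ) :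
    bergmanNorm p α f = eLpNorm f (ENNReal.ofReal p) (weightedArea α) := by
  rw [eLpNorm_eq_lintegral_rpow_enorm_toReal (by simpa using hp) ENNReal.ofReal_ne_top,
    ENNReal.toReal_ofReal hp.le, lintegral_weightedArea, bergmanNorm,
    ← lintegral_const_mul' _ _ ENNReal.ofReal_ne_top]
  congr 1
  refine setLIntegral_congr_fun measurableSet_ball fun z hz => ?_
  have hz' : 0 ≤ 1 - ‖z‖ ^ 2 := by nlinarith [norm_nonneg z, mem_ball_zero_iff.1 hz]
  simp only [← ofReal_norm, ENNReal.ofReal_rpow_of_nonneg (norm_nonneg _) hp.le]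
  rw [ENNReal.ofReal_mul (Real.rpow_nonneg hz' α), ENNReal.ofReal_mul (by linarith), mul_assoc]

lemma dirichletNorm_one_eq {α : ℝ} (hα : -1 ≤ α) (f : ℂ → ℂ) :
    dirichletNorm 1 α f = ‖f 0‖ₑ + ∫⁻ z, ‖deriv f z‖ₑ ∂weightedArea α := by
  rw [dirichletNorm, bergmanNorm_eq_eLpNorm one_pos hα, ENNReal.ofReal_one,
    eLpNorm_one_eq_lintegral_enorm, ofReal_norm]

lemma lintegral_weightedArea_eq_polar (α : ℝ) {F : ℂ → ℝ≥0∞}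
    (hF : Measurable ((ball (0 : ℂ) 1).indicator F)) :
    ∫⁻ z, F z ∂weightedArea α = ∫⁻ r in Ioo (0 : ℝ) 1,
      ENNReal.ofReal ((α + 1) / Real.pi * (r * (1 - r ^ 2) ^ α)) *
        ∫⁻ θ in Ioo (-Real.pi) Real.pi, F (circleMap 0 r θ) := by
  have hmeas : Measurable ((ball (0 : ℂ) 1).indicator fun z =>
      ENNReal.ofReal ((α + 1) * (1 - ‖z‖ ^ 2) ^ α) * F z) := by
    have hdens : Measurable fun z : ℂ => ENNReal.ofReal ((α + 1) * (1 - ‖z‖ ^ 2) ^ α) := by fun_prop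
    convert hdens.mul hF using 1
    exact funext fun z => indicator_mul_right _ _ _
  rw [lintegral_weightedArea, setLIntegral_ball_dA_eq_polar hmeas]
  refine setLIntegral_congr_fun measurableSet_Ioo fun r ⟨hr0, _⟩ => ?_
  have hnorm (θ : ℝ) : ‖circleMap 0 r θ‖ = r := by simp [circleMap, abs_of_pos hr0]
  simp only [hnorm]
  rw [lintegral_const_mul' _ _ ENNReal.ofReal_ne_top, ← mul_assoc,
    ← ENNReal.ofReal_mul (by positivity)]
  congr 2
  ring

-- On each circle the kernel is a Poisson kernel, so integration in the angle already gains a power.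
lemma lintegral_one_div_norm_one_sub_mul_sq_weightedArea_le {α : ℝ} (hα1 : -1 < α) (hα2 : α < 0)
    {w : ℂ} (hw : ‖w‖ < 1) :
    ∫⁻ z, ENNReal.ofReal (1 / ‖1 - w * z‖ ^ 2) ∂weightedArea α ≤
      ENNReal.ofReal (2 / -α) * ENNReal.ofReal ((1 - ‖w‖) ^ α) := by
  have hα : 0 < α + 1 := by linarith
  have hcircle : ∀ r ∈ Ioo (0 : ℝ) 1,
      (ENNReal.ofReal ((α + 1) / Real.pi * (r * (1 - r ^ 2) ^ α)) *
        ∫⁻ θ in Ioo (-Real.pi) Real.pi, ENNReal.ofReal (1 / ‖1 - w * circleMap 0 r θ‖ ^ 2)) ≤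
      ENNReal.ofReal (2 * (α + 1)) * ENNReal.ofReal ((1 - r) ^ α / (1 - ‖w‖ * r)) := by
    intro r ⟨hr0, hr1⟩
    have hwr0 : 0 ≤ ‖w‖ * r := by positivity
    have hwr : ‖w‖ * r < 1 := by nlinarith [norm_nonneg w]
    have hr2 : 0 < 1 - r ^ 2 := by nlinarith
    rw [lintegral_one_div_norm_one_sub_mul_circleMap_sq hr0.le hwr,
      ← ENNReal.ofReal_mul (by positivity), ← ENNReal.ofReal_mul (by positivity)]
    refine ENNReal.ofReal_le_ofReal ?_
    calc (α + 1) / Real.pi * (r * (1 - r ^ 2) ^ α) * (2 * Real.pi / (1 - (‖w‖ * r) ^ 2))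
        = 2 * (α + 1) * (r * ((1 - r ^ 2) ^ α / (1 - (‖w‖ * r) ^ 2))) := by field_simp
      _ ≤ 2 * (α + 1) * (1 * ((1 - r) ^ α / (1 - ‖w‖ * r))) := by
        have hpow : (1 - r ^ 2) ^ α ≤ (1 - r) ^ α :=
          Real.rpow_le_rpow_of_nonpos (by linarith) (by nlinarith) hα2.le
        have hden : 1 - ‖w‖ * r ≤ 1 - (‖w‖ * r) ^ 2 := by nlinarith
        have hden0 : 0 < 1 - ‖w‖ * r := by linarith
        have hden1 : 0 < 1 - (‖w‖ * r) ^ 2 := hden0.trans_le hden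
        gcongr
      _ = _ := by rw [one_mul]
  rw [lintegral_weightedArea_eq_polar α
    (Measurable.indicator (by fun_prop) measurableSet_ball)]
  calc _ ≤ ENNReal.ofReal (2 * (α + 1)) *
        ∫⁻ r in Ioo (0 : ℝ) 1, ENNReal.ofReal ((1 - r) ^ α / (1 - ‖w‖ * r)) := by
        rw [← lintegral_const_mul' _ _ ENNReal.ofReal_ne_top]
        exact setLIntegral_mono' measurableSet_Ioo hcircle
    _ ≤ ENNReal.ofReal (2 * (α + 1)) * ENNReal.ofReal ((1 - ‖w‖) ^ α / (-α * (α + 1))) := by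
        gcongr
        exact setLIntegral_one_sub_rpow_div_le hα1 hα2 (norm_nonneg w) hw
    _ = _ := by
        rw [← ENNReal.ofReal_mul (by positivity),
          ← ENNReal.ofReal_mul (div_nonneg zero_le_two (neg_nonneg.2 hα2.le))]
        congr 1
        field_simp

end WeightedArea

section RadialEmbedding

variable {E : Type*} [NormedAddCommGroup E] [NormedSpace ℂ E] [CompleteSpace E] {g : ℂ → E} {α : ℝ}

lemma ball_half_one_sub_norm_subset_ball (c : ℂ) : ball c ((1 - ‖c‖) / 2) ⊆ ball 0 1 := by
  rcases lt_or_ge ‖c‖ 1 with hc | hc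
  · refine ball_subset_ball' ?_
    rw [dist_zero_right]
    linarith
  · rw [ball_eq_empty.2 (by linarith)]
    exact empty_subset _

lemma rpow_one_sub_norm_le_of_mem_ball (hα2 : α ≤ 0) {c z : ℂ}
    (hz : z ∈ ball c ((1 - ‖c‖) / 2)) :
    (3 * (1 - ‖c‖)) ^ α ≤ (1 - ‖z‖ ^ 2) ^ α := by
  have hz1 : ‖z‖ < 1 := by simpa using ball_half_one_sub_norm_subset_ball c hz
  have hcz : ‖c‖ - ‖z‖ < (1 - ‖c‖) / 2 := by
    have hdist := (norm_sub_norm_le c z).trans_lt (mem_ball_iff_norm'.1 hz)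
    exact hdist
  refine Real.rpow_le_rpow_of_nonpos (by nlinarith [norm_nonneg z]) ?_ hα2
  nlinarith [norm_nonneg z]

lemma enorm_mul_ofReal_one_sub_norm_rpow_le (hα1 : -1 < α) (hα2 : α ≤ 0)
    (hg : DifferentiableOn ℂ g (ball 0 1)) {c : ℂ} (hc : ‖c‖ < 1) :
    ‖g c‖ₑ * ENNReal.ofReal ((1 - ‖c‖) ^ (α + 2)) ≤
      ENNReal.ofReal (4 * 3 ^ (-α) / (α + 1)) *
        ∫⁻ z in ball c ((1 - ‖c‖) / 2), ‖g z‖ₑ ∂weightedArea α := by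
  have hα : 0 < α + 1 := by linarith
  have hδ : 0 < 1 - ‖c‖ := by linarith
  have hsub := ball_half_one_sub_norm_subset_ball c
  have hconst : (1 - ‖c‖) ^ (α + 2) = 4 * 3 ^ (-α) / (α + 1) *
      ((α + 1) * (3 * (1 - ‖c‖)) ^ α * ((1 - ‖c‖) / 2) ^ 2) := by
    rw [Real.mul_rpow (by norm_num) hδ.le, Real.rpow_neg (by norm_num), Real.rpow_add hδ,
      Real.rpow_two]
    field_simp
    norm_num
  calc ‖g c‖ₑ * ENNReal.ofReal ((1 - ‖c‖) ^ (α + 2))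
      = ENNReal.ofReal (4 * 3 ^ (-α) / (α + 1)) *
          (ENNReal.ofReal ((α + 1) * (3 * (1 - ‖c‖)) ^ α) *
            (ENNReal.ofReal (((1 - ‖c‖) / 2) ^ 2) * ‖g c‖ₑ)) := by
        rw [hconst, ENNReal.ofReal_mul (by positivity), ENNReal.ofReal_mul (by positivity)]
        ring
    _ ≤ ENNReal.ofReal (4 * 3 ^ (-α) / (α + 1)) *
          (ENNReal.ofReal ((α + 1) * (3 * (1 - ‖c‖)) ^ α) *
            ∫⁻ z in ball c ((1 - ‖c‖) / 2), ‖g z‖ₑ ∂dA) := by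
        gcongr
        exact ofReal_sq_mul_enorm_le_setLIntegral_ball_dA (hg.mono hsub) (by positivity)
    _ ≤ _ := by
        rw [setLIntegral_weightedArea α _ measurableSet_ball hsub,
          ← lintegral_const_mul' _ _ ENNReal.ofReal_ne_top]
        refine mul_le_mul_right (setLIntegral_mono' measurableSet_ball fun z hz => ?_) _
        exact mul_le_mul_left (ENNReal.ofReal_le_ofReal <|
          mul_le_mul_of_nonneg_left (rpow_one_sub_norm_le_of_mem_ball hα2 hz) hα.le) _

/-- The kernel `(1 - s)⁻¹ 𝟙[|z - s| < (1 - s) / 2]`, which averages over a disc centred at the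
point `s` of the radius `[0, 1)` and contained in the unit disc. -/
noncomputable def radialKernel (s : ℝ) (z : ℂ) : ℝ≥0∞ :=
  (ball (s : ℂ) ((1 - s) / 2)).indicator (fun _ => ENNReal.ofReal (1 - s)⁻¹) z

lemma measurable_uncurry_radialKernel : Measurable (Function.uncurry radialKernel) :=
  Measurable.indicator (f := fun p : ℝ × ℂ => ENNReal.ofReal (1 - p.1)⁻¹) (by fun_prop)
    (measurableSet_lt (f := fun p : ℝ × ℂ => dist p.2 p.1) (by fun_prop) (by fun_prop))

lemma enorm_mul_ofReal_one_sub_rpow_le_lintegral_radialKernel (hα1 : -1 < α) (hα2 : α ≤ 0)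
    (hg : DifferentiableOn ℂ g (ball 0 1)) {s : ℝ} (hs : s ∈ Ioo 0 1) :
    ‖g s‖ₑ * ENNReal.ofReal ((1 - s) ^ (α + 1)) ≤
      ENNReal.ofReal (4 * 3 ^ (-α) / (α + 1)) *
        ∫⁻ z, radialKernel s z * ‖g z‖ₑ ∂weightedArea α := by
  have hs1 : 0 < 1 - s := sub_pos.2 hs.2
  have hnorm : ‖(s : ℂ)‖ = s := by rw [Complex.norm_real, Real.norm_of_nonneg hs.1.le]
  have hmean := enorm_mul_ofReal_one_sub_norm_rpow_le hα1 hα2 hg (hnorm.trans_lt hs.2)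
  rw [hnorm] at hmean
  calc ‖g s‖ₑ * ENNReal.ofReal ((1 - s) ^ (α + 1))
      = ENNReal.ofReal (1 - s)⁻¹ * (‖g s‖ₑ * ENNReal.ofReal ((1 - s) ^ (α + 2))) := by
        rw [mul_left_comm, ← ENNReal.ofReal_mul (by positivity), Real.rpow_add_one hs1.ne',
          Real.rpow_add hs1, Real.rpow_two]
        congr 2
        field_simp
    _ ≤ ENNReal.ofReal (1 - s)⁻¹ * (ENNReal.ofReal (4 * 3 ^ (-α) / (α + 1)) *
          ∫⁻ z in ball (s : ℂ) ((1 - s) / 2), ‖g z‖ₑ ∂weightedArea α) := by gcongr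
    _ = _ := by
        simp only [radialKernel, ← indicator_mul_left _ _ (fun z => ‖g z‖ₑ)]
        rw [mul_left_comm, ← lintegral_const_mul' _ _ ENNReal.ofReal_ne_top,
          ← lintegral_indicator measurableSet_ball]

-- The points `s` whose disc contains `z` satisfy `2(1 - |z|)/3 ≤ 1 - s ≤ 2(1 - |z|)`.
lemma setLIntegral_radialKernel_le_two {z : ℂ} (hz : ‖z‖ < 1) :
    ∫⁻ s in Ioo (0 : ℝ) 1, radialKernel s z ≤ 2 := by
  set δ := 1 - ‖z‖
  have hδ0 : 0 < δ := by linarith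
  have hpoint : ∀ s ∈ Ioo (0 : ℝ) 1, radialKernel s z ≤
      (Icc (1 - 2 * δ) (1 - 2 * δ / 3)).indicator (fun _ => ENNReal.ofReal (2 * δ / 3)⁻¹) s := by
    intro s hs
    refine indicator_apply_le' (fun hmem => ?_) fun _ => zero_le
    have hnorm : ‖(s : ℂ)‖ = s := by rw [Complex.norm_real, Real.norm_of_nonneg hs.1.le]
    have habs : |‖z‖ - s| < (1 - s) / 2 := by
      simpa only [hnorm] using (abs_norm_sub_norm_le z s).trans_lt (mem_ball_iff_norm.1 hmem)
    have hIcc : s ∈ Icc (1 - 2 * δ) (1 - 2 * δ / 3) := by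
      constructor <;> linarith [abs_lt.1 habs]
    rw [indicator_of_mem hIcc]
    gcongr
    linarith [hIcc.2]
  calc _ ≤ ∫⁻ s, (Icc (1 - 2 * δ) (1 - 2 * δ / 3)).indicator
          (fun _ => ENNReal.ofReal (2 * δ / 3)⁻¹) s :=
        (setLIntegral_mono' measurableSet_Ioo hpoint).trans (setLIntegral_le_lintegral _ _)
    _ = ENNReal.ofReal ((2 * δ / 3)⁻¹ * (1 - 2 * δ / 3 - (1 - 2 * δ))) := by
        rw [lintegral_indicator_const measurableSet_Icc, Real.volume_Icc,
          ← ENNReal.ofReal_mul (by positivity)]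
    _ = 2 := by
        rw [show (2 * δ / 3)⁻¹ * (1 - 2 * δ / 3 - (1 - 2 * δ)) = 2 by field_simp; ring,
          ENNReal.ofReal_ofNat]

lemma setLIntegral_Ioo_enorm_mul_one_sub_rpow_le_weightedArea (hα1 : -1 < α) (hα2 : α ≤ 0)
    (hg : DifferentiableOn ℂ g (ball 0 1)) :
    ∫⁻ s in Ioo (0 : ℝ) 1, ‖g s‖ₑ * ENNReal.ofReal ((1 - s) ^ (α + 1)) ≤
      ENNReal.ofReal (8 * 3 ^ (-α) / (α + 1)) * ∫⁻ z, ‖g z‖ₑ ∂weightedArea α := by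
  have hgm : AEMeasurable (fun z => ‖g z‖ₑ) (weightedArea α) := by
    have hball : (weightedArea α).restrict (ball 0 1) = weightedArea α :=
      Measure.restrict_eq_self_of_ae_mem (by simpa using ae_norm_lt_one_weightedArea α)
    rw [← hball]
    exact hg.continuousOn.enorm.aemeasurable measurableSet_ball
  calc _ ≤ ∫⁻ s in Ioo (0 : ℝ) 1, ENNReal.ofReal (4 * 3 ^ (-α) / (α + 1)) *
          ∫⁻ z, radialKernel s z * ‖g z‖ₑ ∂weightedArea α :=
        setLIntegral_mono' measurableSet_Ioo fun s hs =>
          enorm_mul_ofReal_one_sub_rpow_le_lintegral_radialKernel hα1 hα2 hg hs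
    _ = ENNReal.ofReal (4 * 3 ^ (-α) / (α + 1)) *
          ∫⁻ z, (∫⁻ s in Ioo (0 : ℝ) 1, radialKernel s z) * ‖g z‖ₑ ∂weightedArea α := by
        rw [lintegral_const_mul' _ _ ENNReal.ofReal_ne_top, lintegral_lintegral_swap
          (measurable_uncurry_radialKernel.aemeasurable.mul hgm.comp_snd)]
        simp only [lintegral_mul_const' _ _ enorm_ne_top]
    _ ≤ ENNReal.ofReal (4 * 3 ^ (-α) / (α + 1)) * ∫⁻ z, 2 * ‖g z‖ₑ ∂weightedArea α := by
        refine mul_le_mul_right (lintegral_mono_ae ?_) _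
        filter_upwards [ae_norm_lt_one_weightedArea α] with z hz
        exact mul_le_mul_left (setLIntegral_radialKernel_le_two hz) _
    _ = _ := by
        rw [lintegral_const_mul' _ _ ENNReal.ofNat_ne_top, ← mul_assoc,
          ← ENNReal.ofReal_ofNat 2, ← ENNReal.ofReal_mul' zero_le_two]
        congr 2
        ring

end RadialEmbedding

section Carleson

/-- `μ` is a Carleson measure on `[0, 1)` with constant `C`. The bound is stated in `ℝ≥0∞`, so it
includes the finiteness of `μ` on `[0, 1)`. -/
def IsCarlesonWith (C : ℝ) (μ : Measure ℝ) : Prop :=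
  ∀ t ∈ Ico (0 : ℝ) 1, μ (Ico t 1) ≤ ENNReal.ofReal (C * (1 - t))

lemma IsCarlesonWith.setLIntegral_le_of_monotoneOn {C : ℝ} {μ : Measure ℝ}
    (hμ : IsCarlesonWith C μ) {g : ℝ → ℝ≥0∞} (hg : MonotoneOn g (Ico 0 1)) :
    ∫⁻ t in Ico (0 : ℝ) 1, g t ∂μ ≤ ENNReal.ofReal C * ∫⁻ t in Ico (0 : ℝ) 1, g t := by
  have : NullSingletonClass (ENNReal.ofReal C • volume : Measure ℝ) := ⟨fun x => by simp⟩
  rw [← smul_eq_mul, ← lintegral_smul_measure, ← Measure.restrict_smul]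
  refine setLIntegral_Ico_le_of_monotoneOn (fun t ht => (hμ t ht).trans_eq ?_) hg
  rw [ENNReal.ofReal_mul' (sub_nonneg.2 ht.2.le), Measure.smul_apply, Real.volume_Ico, smul_eq_mul]

lemma setLIntegral_add_lintegral_Ioc_mul_one_sub_rpow {α : ℝ} (hα : -1 < α) (a : ℝ≥0∞)
    {h : ℝ → ℝ≥0∞} (hh : Measurable h) :
    ∫⁻ t in Ico (0 : ℝ) 1, (a + ∫⁻ s in Ioc 0 t, h s) * ENNReal.ofReal ((1 - t) ^ α) =
      ENNReal.ofReal (α + 1)⁻¹ *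
        (a + ∫⁻ s in Ioo (0 : ℝ) 1, h s * ENNReal.ofReal ((1 - s) ^ (α + 1))) := by
  have htail {s : ℝ} (hs : s ≤ 1) : ∫⁻ t in Ico s 1, ENNReal.ofReal ((1 - t) ^ α) =
      ENNReal.ofReal (α + 1)⁻¹ * ENNReal.ofReal ((1 - s) ^ (α + 1)) := by
    rw [setLIntegral_Ico_one_sub_rpow hα hs, div_eq_inv_mul,
      ENNReal.ofReal_mul (inv_nonneg.2 (by linarith))]
  simp only [add_mul]
  rw [lintegral_add_left (by fun_prop), lintegral_const_mul _ (by fun_prop), htail zero_le_one,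
    setLIntegral_Ico_lintegral_Ioc_mul hh (by fun_prop),
    setLIntegral_congr_fun measurableSet_Ioo fun s hs => by rw [htail hs.2.le, mul_left_comm],
    lintegral_const_mul' _ _ ENNReal.ofReal_ne_top, sub_zero, Real.one_rpow, ENNReal.ofReal_one,
    mul_one, mul_comm a, mul_add]

variable {f : ℂ → ℂ}

lemma norm_ofReal_lt_one {t : ℝ} (ht : t ∈ Ico (0 : ℝ) 1) : ‖(t : ℂ)‖ < 1 := by
  rw [Complex.norm_real, Real.norm_of_nonneg ht.1]
  exact ht.2

lemma enorm_le_enorm_zero_add_setLIntegral_enorm_deriv (hf : DifferentiableOn ℂ f (ball 0 1))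
    {t : ℝ} (ht : t ∈ Ico (0 : ℝ) 1) :
    ‖f t‖ₑ ≤ ‖f 0‖ₑ + ∫⁻ s in Ioc (0 : ℝ) t, ‖deriv f s‖ₑ := by
  have hmem : ∀ s ∈ uIcc 0 t, (s : ℂ) ∈ ball (0 : ℂ) 1 := fun s hs => by
    rw [uIcc_of_le ht.1] at hs
    simpa using norm_ofReal_lt_one ⟨hs.1, hs.2.trans_lt ht.2⟩
  have hcont : ContinuousOn (fun s : ℝ => deriv f s) (uIcc 0 t) :=
    (hf.deriv isOpen_ball).continuousOn.comp Complex.continuous_ofReal.continuousOn hmem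
  have hftc := intervalIntegral.integral_eq_sub_of_hasDerivAt (f := fun s : ℝ => f s)
    (fun s hs => (hf.differentiableAt
      (isOpen_ball.mem_nhds (hmem s hs))).hasDerivAt.comp_ofReal) hcont.intervalIntegrable
  rw [intervalIntegral.integral_of_le ht.1, Complex.ofReal_zero] at hftc
  calc ‖f t‖ₑ = ‖f 0 + ∫ s in Ioc (0 : ℝ) t, deriv f s‖ₑ := by rw [hftc, add_sub_cancel]
    _ ≤ ‖f 0‖ₑ + ‖∫ s in Ioc (0 : ℝ) t, deriv f s‖ₑ := enorm_add_le _ _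
    _ ≤ _ := by gcongr; exact enorm_integral_le_lintegral_enorm _

lemma monotoneOn_add_lintegral_Ioc_mul_one_sub_rpow {α : ℝ} (hα : α ≤ 0) (a : ℝ≥0∞)
    (h : ℝ → ℝ≥0∞) :
    MonotoneOn (fun t : ℝ => (a + ∫⁻ s in Ioc 0 t, h s) * ENNReal.ofReal ((1 - t) ^ α))
      (Ico 0 1) := by
  intro s _ t ht hst
  have hpow : (1 - s) ^ α ≤ (1 - t) ^ α :=
    Real.rpow_le_rpow_of_nonpos (by linarith [ht.2]) (by linarith) hα
  dsimp only
  gcongr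

lemma IsCarlesonWith.setLIntegral_enorm_mul_one_sub_rpow_le {C α : ℝ} {μ : Measure ℝ}
    (hμ : IsCarlesonWith C μ) (hα1 : -1 < α) (hα2 : α ≤ 0)
    (hf : DifferentiableOn ℂ f (ball 0 1)) :
    ∫⁻ t in Ico (0 : ℝ) 1, ‖f t‖ₑ * ENNReal.ofReal ((1 - t) ^ α) ∂μ ≤
      ENNReal.ofReal (C * ((α + 1)⁻¹ * (1 + 8 * 3 ^ (-α) / (α + 1)))) * dirichletNorm 1 α f := by
  have hα : 0 < α + 1 := by linarith
  set h : ℝ → ℝ≥0∞ := fun s => ‖deriv f s‖ₑ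
  have hh : Measurable h := ((measurable_deriv f).comp Complex.measurable_ofReal).enorm
  calc _ ≤ ∫⁻ t in Ico (0 : ℝ) 1, (‖f 0‖ₑ + ∫⁻ s in Ioc 0 t, h s) *
          ENNReal.ofReal ((1 - t) ^ α) ∂μ := by
        refine setLIntegral_mono' measurableSet_Ico fun t ht => ?_
        gcongr
        exact enorm_le_enorm_zero_add_setLIntegral_enorm_deriv hf ht
    _ ≤ ENNReal.ofReal C * ∫⁻ t in Ico (0 : ℝ) 1, (‖f 0‖ₑ + ∫⁻ s in Ioc 0 t, h s) *
          ENNReal.ofReal ((1 - t) ^ α) :=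
        hμ.setLIntegral_le_of_monotoneOn (monotoneOn_add_lintegral_Ioc_mul_one_sub_rpow hα2 _ h)
    _ = ENNReal.ofReal C * (ENNReal.ofReal (α + 1)⁻¹ *
          (‖f 0‖ₑ + ∫⁻ s in Ioo (0 : ℝ) 1, h s * ENNReal.ofReal ((1 - s) ^ (α + 1)))) := by
        rw [setLIntegral_add_lintegral_Ioc_mul_one_sub_rpow hα1 _ hh]
    _ ≤ ENNReal.ofReal C * (ENNReal.ofReal (α + 1)⁻¹ *
          (ENNReal.ofReal (1 + 8 * 3 ^ (-α) / (α + 1)) * dirichletNorm 1 α f)) := by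
        gcongr
        rw [dirichletNorm_one_eq hα1.le, mul_add]
        gcongr
        · exact le_mul_of_one_le_left zero_le
            (ENNReal.one_le_ofReal.2 (le_add_of_nonneg_right (by positivity)))
        · refine (setLIntegral_Ioo_enorm_mul_one_sub_rpow_le_weightedArea hα1 hα2
            (hf.deriv isOpen_ball)).trans ?_
          gcongr
          exact le_add_of_nonneg_left zero_le_one
    _ = _ := by
        rw [ENNReal.ofReal_mul' (by positivity), ENNReal.ofReal_mul (by positivity), mul_assoc,
          mul_assoc]

end Carleson

section IntegralOperator

variable {μ : Measure ℝ} {f : ℂ → ℂ} {α : ℝ} {z : ℂ}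

lemma one_sub_norm_le_norm_one_sub_ofReal_mul (z : ℂ) {t : ℝ} (ht : t ∈ Ico (0 : ℝ) 1) :
    1 - ‖z‖ ≤ ‖1 - t * z‖ := by
  have htz : ‖(t : ℂ) * z‖ ≤ ‖z‖ := by
    rw [norm_mul]
    exact mul_le_of_le_one_left (norm_nonneg z) (norm_ofReal_lt_one ht).le
  calc 1 - ‖z‖ ≤ ‖(1 : ℂ)‖ - ‖(t : ℂ) * z‖ := by rw [norm_one]; gcongr
    _ ≤ ‖1 - t * z‖ := norm_sub_norm_le _ _

lemma integrable_div_one_sub_mul (hsupp : ∀ᵐ t ∂μ, t ∈ Ico (0 : ℝ) 1)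
    (hf : Integrable (fun t : ℝ => f t) μ) (hz : ‖z‖ < 1) :
    Integrable (fun t : ℝ => f t / (1 - t * z)) μ := by
  simp only [div_eq_mul_inv]
  refine hf.mul_bdd (c := (1 - ‖z‖)⁻¹) (Measurable.aestronglyMeasurable (by fun_prop)) ?_
  filter_upwards [hsupp] with t ht
  rw [norm_inv]
  exact inv_anti₀ (sub_pos.2 hz) (one_sub_norm_le_norm_one_sub_ofReal_mul z ht)

lemma hasDerivAt_Imu (hsupp : ∀ᵐ t ∂μ, t ∈ Ico (0 : ℝ) 1)
    (hf : Integrable (fun t : ℝ => f t) μ) (hz : ‖z‖ < 1) :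
    HasDerivAt (Imu μ f) (∫ t : ℝ, f t * (t / (1 - t * z) ^ 2) ∂μ) z := by
  obtain ⟨ρ, hzρ, hρ⟩ := exists_between hz
  have hρ' : 0 < 1 - ρ := sub_pos.2 hρ
  have hlower {t : ℝ} (ht : t ∈ Ico (0 : ℝ) 1) {x : ℂ} (hx : x ∈ ball (0 : ℂ) ρ) :
      1 - ρ ≤ ‖1 - t * x‖ :=
    (sub_le_sub_left (mem_ball_zero_iff.1 hx).le 1).trans
      (one_sub_norm_le_norm_one_sub_ofReal_mul x ht)
  refine (hasDerivAt_integral_of_dominated_loc_of_deriv_le (s := ball 0 ρ)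
    (F := fun x (t : ℝ) => f t / (1 - t * x))
    (F' := fun x (t : ℝ) => f t * (t / (1 - t * x) ^ 2))
    (bound := fun t : ℝ => ‖f t‖ * (1 / (1 - ρ) ^ 2)) (isOpen_ball.mem_nhds (by simpa using hzρ))
    ?_ (integrable_div_one_sub_mul hsupp hf hz) ?_ ?_ (hf.norm.mul_const _) ?_).2
  · filter_upwards [isOpen_ball.mem_nhds (mem_ball_zero_iff.2 hz)] with x hx
    exact (integrable_div_one_sub_mul hsupp hf (mem_ball_zero_iff.1 hx)).aestronglyMeasurable
  · exact hf.aestronglyMeasurable.mul (Measurable.aestronglyMeasurable (by fun_prop))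
  · filter_upwards [hsupp] with t ht x hx
    rw [norm_mul, norm_div, norm_pow]
    gcongr
    · exact (norm_ofReal_lt_one ht).le
    · exact hlower ht hx
  · filter_upwards [hsupp] with t ht x hx
    have hne : 1 - (t : ℂ) * x ≠ 0 := norm_pos_iff.1 (hρ'.trans_le (hlower ht hx))
    have hden : HasDerivAt (fun x : ℂ => 1 - (t : ℂ) * x) (-(t : ℂ)) x := by
      simpa using ((hasDerivAt_id x).const_mul (t : ℂ)).const_sub 1
    simpa [div_eq_mul_inv] using (hden.inv hne).const_mul (f t)

lemma enorm_deriv_Imu_le (hsupp : ∀ᵐ t ∂μ, t ∈ Ico (0 : ℝ) 1)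
    (hf : Integrable (fun t : ℝ => f t) μ) (hz : ‖z‖ < 1) :
    ‖deriv (Imu μ f) z‖ₑ ≤ ∫⁻ t : ℝ, ‖f t‖ₑ * ENNReal.ofReal (1 / ‖1 - t * z‖ ^ 2) ∂μ := by
  rw [(hasDerivAt_Imu hsupp hf hz).deriv]
  refine (enorm_integral_le_lintegral_enorm _).trans (lintegral_mono_ae ?_)
  filter_upwards [hsupp] with t ht
  rw [enorm_mul, ← ofReal_norm (_ / _), norm_div, norm_pow]
  gcongr
  exact (norm_ofReal_lt_one ht).le

lemma lintegral_enorm_deriv_Imu_le [SFinite μ] (hα1 : -1 < α) (hα2 : α < 0)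
    (hsupp : ∀ᵐ t ∂μ, t ∈ Ico (0 : ℝ) 1) (hf : Integrable (fun t : ℝ => f t) μ) :
    ∫⁻ z, ‖deriv (Imu μ f) z‖ₑ ∂weightedArea α ≤
      ENNReal.ofReal (2 / -α) * ∫⁻ t : ℝ, ‖f t‖ₑ * ENNReal.ofReal ((1 - t) ^ α) ∂μ := by
  have hmeas : AEMeasurable (Function.uncurry fun (z : ℂ) (t : ℝ) =>
      ‖f t‖ₑ * ENNReal.ofReal (1 / ‖1 - t * z‖ ^ 2)) ((weightedArea α).prod μ) := by
    have hkernel : Measurable fun p : ℂ × ℝ => ENNReal.ofReal (1 / ‖1 - p.2 * p.1‖ ^ 2) := by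
      fun_prop
    exact hf.aestronglyMeasurable.enorm.comp_snd.mul hkernel.aemeasurable
  calc _ ≤ ∫⁻ z, (∫⁻ t : ℝ, ‖f t‖ₑ * ENNReal.ofReal (1 / ‖1 - t * z‖ ^ 2) ∂μ)
          ∂weightedArea α := by
        refine lintegral_mono_ae ?_
        filter_upwards [ae_norm_lt_one_weightedArea α] with z hz
        exact enorm_deriv_Imu_le hsupp hf hz
    _ = ∫⁻ t : ℝ, ‖f t‖ₑ * (∫⁻ z, ENNReal.ofReal (1 / ‖1 - t * z‖ ^ 2) ∂weightedArea α) ∂μ := by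
        rw [lintegral_lintegral_swap hmeas]
        simp only [lintegral_const_mul' _ _ enorm_ne_top]
    _ ≤ ∫⁻ t : ℝ, ENNReal.ofReal (2 / -α) * (‖f t‖ₑ * ENNReal.ofReal ((1 - t) ^ α)) ∂μ := by
        refine lintegral_mono_ae ?_
        filter_upwards [hsupp] with t ht
        have hkernel := lintegral_one_div_norm_one_sub_mul_sq_weightedArea_le hα1 hα2
          (norm_ofReal_lt_one ht)
        rw [Complex.norm_real, Real.norm_of_nonneg ht.1] at hkernel
        rw [mul_left_comm]
        gcongr
    _ = _ := lintegral_const_mul' _ _ ENNReal.ofReal_ne_top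

lemma lintegral_enorm_le_lintegral_enorm_mul_one_sub_rpow (hα : α ≤ 0)
    (hsupp : ∀ᵐ t ∂μ, t ∈ Ico (0 : ℝ) 1) :
    ∫⁻ t : ℝ, ‖f t‖ₑ ∂μ ≤ ∫⁻ t : ℝ, ‖f t‖ₑ * ENNReal.ofReal ((1 - t) ^ α) ∂μ := by
  refine lintegral_mono_ae ?_
  filter_upwards [hsupp] with t ht
  refine le_mul_of_one_le_right zero_le (ENNReal.one_le_ofReal.2 ?_)
  exact Real.one_le_rpow_of_pos_of_le_one_of_nonpos (by linarith [ht.2]) (by linarith [ht.1]) hα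

lemma integrable_of_lintegral_enorm_mul_one_sub_rpow_lt_top (hα : α ≤ 0)
    (hsupp : ∀ᵐ t ∂μ, t ∈ Ico (0 : ℝ) 1) (hf : DifferentiableOn ℂ f (ball 0 1))
    (hfin : ∫⁻ t : ℝ, ‖f t‖ₑ * ENNReal.ofReal ((1 - t) ^ α) ∂μ < ⊤) :
    Integrable (fun t : ℝ => f t) μ := by
  refine ⟨?_, (lintegral_enorm_le_lintegral_enorm_mul_one_sub_rpow hα hsupp).trans_lt hfin⟩
  rw [← Measure.restrict_eq_self_of_ae_mem hsupp]
  refine ContinuousOn.aestronglyMeasurable ?_ measurableSet_Ico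
  exact hf.continuousOn.comp Complex.continuous_ofReal.continuousOn fun t ht => by
    simpa using norm_ofReal_lt_one ht

lemma dirichletNorm_Imu_le [SFinite μ] (hα1 : -1 < α) (hα2 : α < 0)
    (hsupp : ∀ᵐ t ∂μ, t ∈ Ico (0 : ℝ) 1) (hf : Integrable (fun t : ℝ => f t) μ) :
    dirichletNorm 1 α (Imu μ f) ≤
      ENNReal.ofReal (1 + 2 / -α) * ∫⁻ t : ℝ, ‖f t‖ₑ * ENNReal.ofReal ((1 - t) ^ α) ∂μ := by
  have hzero : ‖Imu μ f 0‖ₑ ≤ ∫⁻ t : ℝ, ‖f t‖ₑ ∂μ := by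
    simpa [Imu] using enorm_integral_le_lintegral_enorm (μ := μ) fun t : ℝ => f t
  rw [dirichletNorm_one_eq hα1.le, ENNReal.ofReal_add zero_le_one
    (div_nonneg zero_le_two (neg_nonneg.2 hα2.le)), ENNReal.ofReal_one, add_mul, one_mul]
  exact add_le_add
    (hzero.trans (lintegral_enorm_le_lintegral_enorm_mul_one_sub_rpow hα2.le hsupp))
    (lintegral_enorm_deriv_Imu_le hα1 hα2 hsupp hf)

end IntegralOperator

/-- For `-1 < α < 0`, if `μ` is a Carleson measure on `[0,1)` then `I_μ`
is well defined and bounded from `𝒟¹_α` into itself. -/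
theorem Hmu_bounded_D1a (α : ℝ) (hα1 : -1 < α) (hα2 : α < 0)
    (μ : Measure ℝ) [IsFiniteMeasure μ] (hsupp : μ (Ico (0 : ℝ) 1)ᶜ = 0)
    (hμ : ∃ C > 0, ∀ t ∈ Ico (0 : ℝ) 1, (μ (Ico t 1)).toReal ≤ C * (1 - t)) :
    ∃ C > 0, ∀ f : ℂ → ℂ, DifferentiableOn ℂ f (ball (0 : ℂ) 1) →
      dirichletNorm 1 α f < ⊤ →
      (∀ z ∈ ball (0 : ℂ) 1, Integrable (fun t : ℝ => f (t : ℂ) / (1 - (t : ℂ) * z)) μ) ∧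
      DifferentiableOn ℂ (Imu μ f) (ball (0 : ℂ) 1) ∧
      dirichletNorm 1 α (Imu μ f) ≤ ENNReal.ofReal C * dirichletNorm 1 α f := by
  obtain ⟨C, hC, hμ⟩ := hμ
  have hcarleson : IsCarlesonWith C μ := fun t ht =>
    (ENNReal.le_ofReal_iff_toReal_le (measure_ne_top μ _)
      (mul_nonneg hC.le (sub_nonneg.2 ht.2.le))).2 (hμ t ht)
  have hsupp' : ∀ᵐ t ∂μ, t ∈ Ico (0 : ℝ) 1 := hsupp
  have hα : 0 < α + 1 := by linarith
  have hα' : 0 < -α := by linarith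
  set K := C * ((α + 1)⁻¹ * (1 + 8 * 3 ^ (-α) / (α + 1)))
  refine ⟨(1 + 2 / -α) * K, by positivity, fun f hf hfin => ?_⟩
  have hweighted : ∫⁻ t : ℝ, ‖f t‖ₑ * ENNReal.ofReal ((1 - t) ^ α) ∂μ ≤
      ENNReal.ofReal K * dirichletNorm 1 α f := by
    simpa only [Measure.restrict_eq_self_of_ae_mem hsupp'] using
      hcarleson.setLIntegral_enorm_mul_one_sub_rpow_le hα1 hα2.le hf
  have hint : Integrable (fun t : ℝ => f t) μ :=
    integrable_of_lintegral_enorm_mul_one_sub_rpow_lt_top hα2.le hsupp' hf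
      (hweighted.trans_lt (ENNReal.mul_lt_top ENNReal.ofReal_lt_top hfin))
  refine ⟨fun z hz => integrable_div_one_sub_mul hsupp' hint (mem_ball_zero_iff.1 hz),
    fun z hz => (hasDerivAt_Imu hsupp' hint
      (mem_ball_zero_iff.1 hz)).differentiableAt.differentiableWithinAt, ?_⟩
  rw [ENNReal.ofReal_mul (by positivity), mul_assoc]
  exact (dirichletNorm_Imu_le hα1 hα2 hsupp' hint).trans (mul_le_mul_right hweighted _)
end

section
/- Let α > −1. There exists a constant C = C(α) > 0 such that for every f in the Dirichlet-type space 𝒟^1_α with Taylor expansion f(z) = ∑_{n=0}^∞ a_n z^n, one has ∑_{n=0}^∞ |a_n| (n+1)^{−(1+α)} ≤ C ‖f‖_{𝒟^1_α}. -/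
open MeasureTheory Set Metric Filter Asymptotics
open scoped ENNReal

/-!
Write `M r` for the mean of `|f'|` over the circle of radius `r`. Cauchy's formula gives
`(n + 1) |a (n + 1)| r ^ n ≤ M r`. The moment `∫ r ^ (2 n + 1) (1 - r²) ^ (α + 1) dr` is at least
of order `(n + 1) ^ (-(α + 2))`, so spending one factor `r ^ n` on Cauchy's bound and summing the
other one as a geometric series, with `∑ r ^ n (1 - r²) = 1 + r ≤ 2`, bounds
`∑ |a (n + 1)| (n + 1) ^ (-(α + 1))` by a multiple of `∫ r (1 - r²) ^ α M r dr`, which is the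
`A¹_α` norm of `f'` in polar coordinates.
-/

/-- The normalized Lebesgue integral `(2π)⁻¹ ∫ φ(c + r e^{iθ}) dθ` over a circle, an `ℝ≥0∞`-valued
counterpart of `Real.circleAverage`; for `φ = ‖f‖ₑ` it is the integral mean `M₁(r, f)`. The angle
runs over `(-π, π)` to match `polarCoord.target`. -/
noncomputable def lcircleAverage (φ : ℂ → ℝ≥0∞) (c : ℂ) (r : ℝ) : ℝ≥0∞ :=
  (ENNReal.ofReal (2 * Real.pi))⁻¹ *
    ∫⁻ θ in Ioo (-Real.pi) Real.pi, φ (circleMap c r θ)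

section lcircleAverage

variable {φ ψ : ℂ → ℝ≥0∞} {c : ℂ} {r : ℝ}

lemma lcircleAverage_const_mul {a : ℝ≥0∞} (ha : a ≠ ⊤) :
    lcircleAverage (fun z => a * φ z) c r = a * lcircleAverage φ c r := by
  simp only [lcircleAverage, lintegral_const_mul' _ _ ha, mul_left_comm]

lemma lcircleAverage_congr_sphere (h : EqOn φ ψ (sphere c |r|)) :
    lcircleAverage φ c r = lcircleAverage ψ c r := by
  simp only [lcircleAverage, h (circleMap_mem_sphere' c r _)]

lemma lcircleAverage_enorm_eq_ofReal_circleAverage {E : Type*} [NormedAddCommGroup E] {f : ℂ → E}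
    (hf : CircleIntegrable f c r) :
    lcircleAverage (fun z => ‖f z‖ₑ) c r =
      ENNReal.ofReal (Real.circleAverage (fun z => ‖f z‖) c r) := by
  have hper : Function.Periodic (fun θ => f (circleMap c r θ)) (2 * Real.pi) :=
    (periodic_circleMap c r).comp f
  have hle : -Real.pi ≤ Real.pi := neg_le_self Real.pi_pos.le
  have hint : IntegrableOn (fun θ => f (circleMap c r θ)) (Ioo (-Real.pi) Real.pi) := by
    have h := hper.intervalIntegrable₀ Real.two_pi_pos.ne' hf (-Real.pi) Real.pi
    exact ((intervalIntegrable_iff_integrableOn_Ioc_of_le hle).1 h).mono_set Ioo_subset_Ioc_self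
  have hshift : ∫ θ in (0)..(2 * Real.pi), ‖f (circleMap c r θ)‖ =
      ∫ θ in Ioo (-Real.pi) Real.pi, ‖f (circleMap c r θ)‖ := by
    rw [← integral_Ioc_eq_integral_Ioo, ← intervalIntegral.integral_of_le hle]
    have h := (hper.comp norm).intervalIntegral_add_eq 0 (-Real.pi)
    rwa [zero_add, show -Real.pi + 2 * Real.pi = Real.pi by ring] at h
  rw [lcircleAverage, ← ofReal_integral_norm_eq_lintegral_enorm hint,
    ← ENNReal.ofReal_inv_of_pos Real.two_pi_pos, ← ENNReal.ofReal_mul (by positivity),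
    Real.circleAverage_def, hshift, smul_eq_mul]

end lcircleAverage

section PolarCoordinates

variable {φ : ℂ → ℝ≥0∞}

theorem lintegral_dA_eq_lintegral_lcircleAverage (hφ : Measurable φ) :
    ∫⁻ z, φ z ∂dA = 2 * ∫⁻ r in Ioi (0 : ℝ), ENNReal.ofReal r * lcircleAverage φ 0 r := by
  have hsymm (r θ : ℝ) : Complex.polarCoord.symm (r, θ) = circleMap 0 r θ := by
    simp [Complex.polarCoord_symm_apply, circleMap, Complex.exp_mul_I]
  have hmeas : Measurable fun q : ℝ × ℝ => ENNReal.ofReal q.1 * φ (circleMap 0 q.1 q.2) := by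
    unfold circleMap
    fun_prop
  have hpolar : ∫⁻ z, φ z = ∫⁻ r in Ioi (0 : ℝ), ENNReal.ofReal r *
      ∫⁻ θ in Ioo (-Real.pi) Real.pi, φ (circleMap 0 r θ) := by
    rw [← Complex.lintegral_comp_polarCoord_symm, polarCoord_target, Measure.volume_eq_prod]
    simp only [smul_eq_mul, hsymm]
    rw [setLIntegral_prod _ hmeas.aemeasurable]
    simp only [lintegral_const_mul' _ _ ENNReal.ofReal_ne_top]
  have hpi : (ENNReal.ofReal Real.pi)⁻¹ = 2 * (ENNReal.ofReal (2 * Real.pi))⁻¹ := by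
    rw [ENNReal.ofReal_mul zero_le_two, ENNReal.ofReal_ofNat,
      ENNReal.mul_inv (.inl two_ne_zero) (.inl ENNReal.ofNat_ne_top), ← mul_assoc,
      ENNReal.mul_inv_cancel two_ne_zero ENNReal.ofNat_ne_top, one_mul]
  have hfin : (ENNReal.ofReal (2 * Real.pi))⁻¹ ≠ ⊤ := by
    simp [Real.pi_pos]
  simp only [dA, lintegral_smul_measure, smul_eq_mul, lcircleAverage, hpolar, hpi, mul_assoc,
    mul_left_comm (ENNReal.ofReal _) (ENNReal.ofReal (2 * Real.pi))⁻¹,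
    lintegral_const_mul' _ _ hfin]

lemma setLIntegral_ball_dA (hφ : Measurable φ) (R : ℝ) :
    ∫⁻ z in ball 0 R, φ z ∂dA =
      2 * ∫⁻ r in Ioo 0 R, ENNReal.ofReal r * lcircleAverage φ 0 r := by
  have hnorm {r : ℝ} (hr : 0 < r) {z : ℂ} (hz : z ∈ sphere 0 |r|) : ‖z‖ = r := by
    simpa [abs_of_pos hr] using hz
  rw [← lintegral_indicator measurableSet_ball,
    lintegral_dA_eq_lintegral_lcircleAverage (hφ.indicator measurableSet_ball),
    ← Ioi_inter_Iio, inter_comm, ← setLIntegral_indicator measurableSet_Iio]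
  congr 1
  refine setLIntegral_congr_fun measurableSet_Ioi fun r hr => ?_
  by_cases hrR : r < R
  · rw [indicator_of_mem (mem_Iio.2 hrR)]
    congr 1
    exact lcircleAverage_congr_sphere fun z hz =>
      indicator_of_mem (by simpa [hnorm hr hz] using hrR) φ
  · rw [indicator_of_notMem (notMem_Iio.2 (not_lt.1 hrR)), lcircleAverage_congr_sphere (ψ := 0)]
    · simp [lcircleAverage]
    · exact fun z hz => indicator_of_notMem (by simpa [hnorm hr hz] using hrR) φ

end PolarCoordinates

section BergmanNorm

variable {p α : ℝ} {f g : ℂ → ℂ}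

lemma bergmanNorm_congr (h : EqOn f g (ball 0 1)) : bergmanNorm p α f = bergmanNorm p α g := by
  unfold bergmanNorm
  congr 2
  exact setLIntegral_congr_fun measurableSet_ball fun z hz => by simp only [h hz]

lemma bergmanNorm_eq_lintegral_lcircleAverage (hp : 0 ≤ p) (hf : Measurable f) :
    bergmanNorm p α f =
      (ENNReal.ofReal (α + 1) * (2 * ∫⁻ r in Ioo (0 : ℝ) 1,
        ENNReal.ofReal (r * (1 - r ^ 2) ^ α) * lcircleAverage (fun z => ‖f z‖ₑ ^ p) 0 r)) ^
          (1 / p) := by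
  rw [bergmanNorm, setLIntegral_ball_dA (by fun_prop)]
  congr 3
  refine setLIntegral_congr_fun measurableSet_Ioo fun r hr => ?_
  have hweight : 0 ≤ (1 - r ^ 2) ^ α := Real.rpow_nonneg (by nlinarith [hr.1, hr.2]) α
  have hsphere : EqOn (fun z : ℂ => ENNReal.ofReal ((1 - ‖z‖ ^ 2) ^ α * ‖f z‖ ^ p))
      (fun z => ENNReal.ofReal ((1 - r ^ 2) ^ α) * ‖f z‖ₑ ^ p) (sphere 0 |r|) := by
    intro z hz
    have hzr : ‖z‖ = r := by simpa [abs_of_pos hr.1] using hz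
    simp only [hzr, ENNReal.ofReal_mul hweight,
      ← ENNReal.ofReal_rpow_of_nonneg (norm_nonneg (f z)) hp, ofReal_norm]
  rw [lcircleAverage_congr_sphere hsphere, lcircleAverage_const_mul ENNReal.ofReal_ne_top,
    ENNReal.ofReal_mul hr.1.le, mul_assoc]

end BergmanNorm

lemma eball_one {X : Type*} [PseudoMetricSpace X] (x : X) : eball x 1 = ball x 1 := by
  rw [← ENNReal.ofReal_one, eball_ofReal]

lemma enorm_coeff_mul_pow_le_lcircleAverage {E : Type*} [NormedAddCommGroup E] [NormedSpace ℂ E]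
    [CompleteSpace E] {f : ℂ → E} {p : FormalMultilinearSeries ℂ ℂ E} {c : ℂ} {R : ℝ≥0∞}
    (hf : HasFPowerSeriesOnBall f p c R) {r : ℝ} (hr : 0 < r) (hrR : ENNReal.ofReal r < R)
    (n : ℕ) :
    ‖p.coeff n‖ₑ * ENNReal.ofReal (r ^ n) ≤ lcircleAverage (fun z => ‖f z‖ₑ) c r := by
  lift r to NNReal using hr.le
  have hdiff : DifferentiableOn ℂ f (closedBall c r) := by
    refine hf.differentiableOn.mono ?_
    rw [← closedEBall_coe]
    exact fun z hz => lt_of_le_of_lt hz (by simpa using hrR)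
  have hp : p = cauchyPowerSeries f c r :=
    hf.hasFPowerSeriesAt.eq_formalMultilinearSeries
      (hdiff.hasFPowerSeriesOnBall (by exact_mod_cast hr)).hasFPowerSeriesAt
  have hint : CircleIntegrable f c r :=
    (hdiff.continuousOn.mono sphere_subset_closedBall).circleIntegrable r.2
  rw [lcircleAverage_enorm_eq_ofReal_circleAverage hint, ← ofReal_norm,
    ← ENNReal.ofReal_mul (norm_nonneg _), ← p.norm_apply_eq_norm_coef, hp]
  refine ENNReal.ofReal_le_ofReal ?_
  have hcauchy := norm_cauchyPowerSeries_le f c r n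
  rwa [abs_of_pos hr, inv_pow, ← div_eq_mul_inv, le_div_iff₀ (pow_pos hr n)] at hcauchy

lemma exists_hasFPowerSeriesOnBall_deriv {𝕜 F : Type*} [NontriviallyNormedField 𝕜]
    [NormedAddCommGroup F] [NormedSpace 𝕜 F] [CompleteSpace F] {f : 𝕜 → F}
    {p : FormalMultilinearSeries 𝕜 𝕜 F} {x : 𝕜} {R : ℝ≥0∞} (hf : HasFPowerSeriesOnBall f p x R) :
    ∃ q : FormalMultilinearSeries 𝕜 𝕜 F, HasFPowerSeriesOnBall (deriv f) q x R ∧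
      ∀ n, q.coeff n = (n + 1) • p.coeff (n + 1) :=
  ⟨(ContinuousLinearMap.apply 𝕜 F (1 : 𝕜)).compFormalMultilinearSeries p.derivSeries,
    (ContinuousLinearMap.apply 𝕜 F (1 : 𝕜)).comp_hasFPowerSeriesOnBall hf.fderiv,
    p.derivSeries_coeff_one⟩

lemma hasFPowerSeriesOnBall_ofScalars_of_hasSum {𝕜 : Type*} [RCLike 𝕜] {f : 𝕜 → 𝕜} {a : ℕ → 𝕜}
    {R : ℝ≥0∞} (hR : 0 < R)
    (hf : ∀ z ∈ eball (0 : 𝕜) R, HasSum (fun n : ℕ => a n * z ^ n) (f z)) :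
    HasFPowerSeriesOnBall f (.ofScalars 𝕜 a) 0 R where
  r_le := by
    refine ENNReal.le_of_forall_nnreal_lt fun r hr => ?_
    have hmem : ((r : ℝ) : 𝕜) ∈ eball (0 : 𝕜) R := by simpa [← ofReal_norm] using hr
    exact FormalMultilinearSeries.le_radius_of_summable _ (by simpa using (hf _ hmem).summable.norm)
  r_pos := hR
  hasSum {y} hy := by simpa [mul_comm] using hf y hy

lemma le_lintegral_pow_mul_one_sub_sq_rpow {β : ℝ} (hβ : 0 ≤ β) (m : ℕ) :
    ENNReal.ofReal (1 / 2 * (4 * ((m : ℝ) + 1)) ^ (-(β + 1))) ≤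
      ∫⁻ r in Ioo (0 : ℝ) 1, ENNReal.ofReal (r ^ m * (1 - r ^ 2) ^ β) := by
  -- On the interval of length h at distance h from 1, Bernoulli's inequality keeps r ^ m above
  -- 1 / 2, while 1 - r ^ 2 stays above h.
  set h : ℝ := (4 * ((m : ℝ) + 1))⁻¹ with h_def
  have h_pos : 0 < h := by positivity
  have hm : (m + 1) * h = 1 / 4 := by rw [h_def]; field_simp
  have hh : h ≤ 1 / 4 := by nlinarith [mul_nonneg m.cast_nonneg h_pos.le]
  have hsub : Ioo (1 - 2 * h) (1 - h) ⊆ Ioo (0 : ℝ) 1 :=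
    Ioo_subset_Ioo (by linarith) (by linarith)
  have hbound : ∀ r ∈ Ioo (1 - 2 * h) (1 - h), 1 / 2 * h ^ β ≤ r ^ m * (1 - r ^ 2) ^ β := by
    intro r hr
    have ⟨hr0, hr1⟩ := hsub hr
    have hbernoulli : 1 + m * (r - 1) ≤ r ^ m := by
      simpa using one_add_mul_le_pow (a := r - 1) (by linarith) m
    have hpow : 1 / 2 ≤ r ^ m := by
      nlinarith [mul_le_mul_of_nonneg_left hr.1.le m.cast_nonneg]
    have hsq : h ≤ 1 - r ^ 2 := by nlinarith [hr.2]
    gcongr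
  calc ENNReal.ofReal (1 / 2 * (4 * ((m : ℝ) + 1)) ^ (-(β + 1)))
      = ∫⁻ _ in Ioo (1 - 2 * h) (1 - h), ENNReal.ofReal (1 / 2 * h ^ β) := by
        rw [setLIntegral_const, Real.volume_Ioo, ← ENNReal.ofReal_mul (by positivity),
          Real.rpow_neg (by positivity), ← Real.inv_rpow (by positivity), ← h_def,
          Real.rpow_add_one h_pos.ne']
        congr 1
        ring
    _ ≤ ∫⁻ r in Ioo (1 - 2 * h) (1 - h), ENNReal.ofReal (r ^ m * (1 - r ^ 2) ^ β) :=
        setLIntegral_mono' measurableSet_Ioo fun r hr => ENNReal.ofReal_le_ofReal (hbound r hr)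
    _ ≤ _ := lintegral_mono_set hsub

lemma ofReal_rpow_le_mul_lintegral_pow_mul_one_sub_sq_rpow {β : ℝ} (hβ : 0 ≤ β) (n : ℕ) :
    ENNReal.ofReal (((n : ℝ) + 1) ^ (-(β + 1))) ≤ ENNReal.ofReal (2 * 8 ^ (β + 1)) *
      ∫⁻ r in Ioo (0 : ℝ) 1, ENNReal.ofReal (r ^ (2 * n + 1) * (1 - r ^ 2) ^ β) := by
  have h8 : (8 : ℝ) ^ (β + 1) * 8 ^ (-(β + 1)) = 1 := by
    rw [← Real.rpow_add (by norm_num), add_neg_cancel, Real.rpow_zero]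
  calc ENNReal.ofReal (((n : ℝ) + 1) ^ (-(β + 1)))
      = ENNReal.ofReal (2 * 8 ^ (β + 1)) *
          ENNReal.ofReal (1 / 2 * (4 * (((2 * n + 1 : ℕ) : ℝ) + 1)) ^ (-(β + 1))) := by
        rw [← ENNReal.ofReal_mul (by positivity),
          show 4 * (((2 * n + 1 : ℕ) : ℝ) + 1) = 8 * (n + 1) by push_cast; ring,
          Real.mul_rpow (by norm_num) (by positivity)]
        congr 1
        linear_combination -((n : ℝ) + 1) ^ (-(β + 1)) * h8
    _ ≤ _ := by
        gcongr
        exact le_lintegral_pow_mul_one_sub_sq_rpow hβ (2 * n + 1)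

lemma tsum_ofReal_pow_mul_one_sub_sq {r : ℝ} (hr : r ∈ Ico (0 : ℝ) 1) :
    ∑' n : ℕ, ENNReal.ofReal (r ^ n * (1 - r ^ 2)) = ENNReal.ofReal (1 + r) := by
  have hsum : HasSum (fun n : ℕ => r ^ n * (1 - r ^ 2)) (1 + r) := by
    have hne : 1 - r ≠ 0 := (sub_pos.2 hr.2).ne'
    convert! (hasSum_geometric_of_lt_one hr.1 hr.2).mul_right (1 - r ^ 2) using 1
    field_simp
    ring
  have hnonneg (n : ℕ) : 0 ≤ r ^ n * (1 - r ^ 2) :=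
    mul_nonneg (pow_nonneg hr.1 n) (by nlinarith [hr.1, hr.2])
  rw [← ENNReal.ofReal_tsum_of_nonneg hnonneg hsum.summable, hsum.tsum_eq]

lemma add_one_rpow_neg_le_mul_rpow_neg {x s : ℝ} (hx : 0 < x) (hs : 0 ≤ s) :
    (x + 1) ^ (-s) ≤ x * x ^ (-(s + 1)) :=
  calc (x + 1) ^ (-s) ≤ x ^ (-s) :=
        Real.rpow_le_rpow_of_nonpos hx (le_add_of_nonneg_right zero_le_one) (neg_nonpos.2 hs)
    _ = x * x ^ (-(s + 1)) := by
        rw [show -s = -(s + 1) + 1 by ring, Real.rpow_add_one hx.ne', mul_comm]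

section CoefficientEstimates

variable {α : ℝ} {f g : ℂ → ℂ} {p : FormalMultilinearSeries ℂ ℂ ℂ}

lemma tsum_enorm_coeff_mul_le_lcircleAverage {r : ℝ} (hr : r ∈ Ioo (0 : ℝ) 1)
    (hg : HasFPowerSeriesOnBall g p 0 1) :
    ∑' n : ℕ, ‖p.coeff n‖ₑ * ENNReal.ofReal (r ^ (2 * n + 1) * (1 - r ^ 2) ^ (α + 1)) ≤
      2 * (ENNReal.ofReal (r * (1 - r ^ 2) ^ α) * lcircleAverage (fun z => ‖g z‖ₑ) 0 r) := by
  have hr0 := hr.1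
  have hq : 0 < 1 - r ^ 2 := by nlinarith [hr.2]
  set w := ENNReal.ofReal (r * (1 - r ^ 2) ^ α)
  set M := lcircleAverage (fun z => ‖g z‖ₑ) 0 r
  have hterm (n : ℕ) : ‖p.coeff n‖ₑ * ENNReal.ofReal (r ^ (2 * n + 1) * (1 - r ^ 2) ^ (α + 1)) ≤
      ENNReal.ofReal (r ^ n * (1 - r ^ 2)) * (w * M) :=
    calc ‖p.coeff n‖ₑ * ENNReal.ofReal (r ^ (2 * n + 1) * (1 - r ^ 2) ^ (α + 1))
        = ENNReal.ofReal (r ^ n * (1 - r ^ 2)) * w *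
            (‖p.coeff n‖ₑ * ENNReal.ofReal (r ^ n)) := by
          rw [mul_left_comm, ← ENNReal.ofReal_mul (by positivity),
            ← ENNReal.ofReal_mul (by positivity), Real.rpow_add_one hq.ne']
          ring_nf
      _ ≤ ENNReal.ofReal (r ^ n * (1 - r ^ 2)) * w * M := by
          gcongr
          exact enorm_coeff_mul_pow_le_lcircleAverage hg hr0 (by simpa using hr.2) n
      _ = _ := mul_assoc _ _ _
  calc ∑' n : ℕ, ‖p.coeff n‖ₑ * ENNReal.ofReal (r ^ (2 * n + 1) * (1 - r ^ 2) ^ (α + 1))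
      ≤ ∑' n : ℕ, ENNReal.ofReal (r ^ n * (1 - r ^ 2)) * (w * M) := ENNReal.tsum_le_tsum hterm
    _ = ENNReal.ofReal (1 + r) * (w * M) := by
        rw [ENNReal.tsum_mul_right, tsum_ofReal_pow_mul_one_sub_sq (Ioo_subset_Ico_self hr)]
    _ ≤ 2 * (w * M) := by
        gcongr
        exact ENNReal.ofReal_le_of_le_toReal (by simpa using by linarith [hr.2])

theorem tsum_enorm_coeff_mul_lintegral_le_bergmanNorm (hg : HasFPowerSeriesOnBall g p 0 1) :
    ENNReal.ofReal (α + 1) * ∑' n : ℕ, ‖p.coeff n‖ₑ *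
        ∫⁻ r in Ioo (0 : ℝ) 1, ENNReal.ofReal (r ^ (2 * n + 1) * (1 - r ^ 2) ^ (α + 1)) ≤
      bergmanNorm 1 α g := by
  wlog hmeas : Measurable g generalizing g
  · have heq : EqOn ((ball 0 1).indicator g) g (ball 0 1) := eqOn_indicator
    have hcont : ContinuousOn g (ball 0 1) := eball_one (0 : ℂ) ▸ hg.continuousOn
    rw [← bergmanNorm_congr heq]
    refine this (hg.congr (eball_one (0 : ℂ) ▸ heq.symm)) ?_
    classical
    rw [← piecewise_eq_indicator]
    exact hcont.measurable_piecewise continuousOn_const measurableSet_ball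
  rw [bergmanNorm_eq_lintegral_lcircleAverage zero_le_one hmeas]
  simp only [ENNReal.rpow_one, div_one]
  gcongr
  calc ∑' n : ℕ, ‖p.coeff n‖ₑ *
        ∫⁻ r in Ioo (0 : ℝ) 1, ENNReal.ofReal (r ^ (2 * n + 1) * (1 - r ^ 2) ^ (α + 1))
      = ∫⁻ r in Ioo (0 : ℝ) 1, ∑' n : ℕ,
          ‖p.coeff n‖ₑ * ENNReal.ofReal (r ^ (2 * n + 1) * (1 - r ^ 2) ^ (α + 1)) := by
        rw [lintegral_tsum fun n => by fun_prop]
        simp only [lintegral_const_mul' _ _ enorm_ne_top]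
    _ ≤ ∫⁻ r in Ioo (0 : ℝ) 1,
          2 * (ENNReal.ofReal (r * (1 - r ^ 2) ^ α) * lcircleAverage (fun z => ‖g z‖ₑ) 0 r) :=
        setLIntegral_mono' measurableSet_Ioo fun r hr =>
          tsum_enorm_coeff_mul_le_lcircleAverage hr hg
    _ = _ := lintegral_const_mul' _ _ ENNReal.ofNat_ne_top

theorem tsum_enorm_coeff_le_bergmanNorm (hα : -1 < α) (hg : HasFPowerSeriesOnBall g p 0 1) :
    ∑' n : ℕ, ‖p.coeff n‖ₑ * ENNReal.ofReal (((n : ℝ) + 1) ^ (-(α + 2))) ≤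
      ENNReal.ofReal (2 * 8 ^ (α + 2) / (α + 1)) * bergmanNorm 1 α g := by
  have hα' : 0 < α + 1 := neg_lt_iff_pos_add.1 hα
  set I : ℕ → ℝ≥0∞ := fun n =>
    ∫⁻ r in Ioo (0 : ℝ) 1, ENNReal.ofReal (r ^ (2 * n + 1) * (1 - r ^ 2) ^ (α + 1))
  have hmoment (n : ℕ) : ENNReal.ofReal (((n : ℝ) + 1) ^ (-(α + 2))) ≤
      ENNReal.ofReal (2 * 8 ^ (α + 2)) * I n := by
    simpa only [add_assoc, one_add_one_eq_two] using
      ofReal_rpow_le_mul_lintegral_pow_mul_one_sub_sq_rpow hα'.le n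
  calc ∑' n : ℕ, ‖p.coeff n‖ₑ * ENNReal.ofReal (((n : ℝ) + 1) ^ (-(α + 2)))
      ≤ ∑' n : ℕ, ENNReal.ofReal (2 * 8 ^ (α + 2)) * (‖p.coeff n‖ₑ * I n) := by
        refine ENNReal.tsum_le_tsum fun n => ?_
        rw [mul_left_comm]
        gcongr
        exact hmoment n
    _ = ENNReal.ofReal (2 * 8 ^ (α + 2) / (α + 1)) *
          (ENNReal.ofReal (α + 1) * ∑' n : ℕ, ‖p.coeff n‖ₑ * I n) := by
        rw [ENNReal.tsum_mul_left, ← mul_assoc, ← ENNReal.ofReal_mul (by positivity),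
          div_mul_cancel₀ _ hα'.ne']
    _ ≤ _ := by
        gcongr
        exact tsum_enorm_coeff_mul_lintegral_le_bergmanNorm hg

theorem tsum_enorm_coeff_le_dirichletNorm (hα : -1 < α) (hf : HasFPowerSeriesOnBall f p 0 1) :
    ∑' n : ℕ, ‖p.coeff n‖ₑ * ENNReal.ofReal (((n : ℝ) + 1) ^ (-(α + 1))) ≤
      ENNReal.ofReal (1 + 2 * 8 ^ (α + 2) / (α + 1)) * dirichletNorm 1 α f := by
  have hα' : 0 < α + 1 := neg_lt_iff_pos_add.1 hα
  obtain ⟨q, hq, hcoeff⟩ := exists_hasFPowerSeriesOnBall_deriv hf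
  have hzero : p.coeff 0 = f 0 := hf.coeff_zero _
  have hshift (n : ℕ) :
      ‖p.coeff (n + 1)‖ₑ * ENNReal.ofReal ((((n + 1 : ℕ) : ℝ) + 1) ^ (-(α + 1))) ≤
        ‖q.coeff n‖ₑ * ENNReal.ofReal (((n : ℝ) + 1) ^ (-(α + 2))) := by
    have hn : (0 : ℝ) < n + 1 := n.cast_add_one_pos
    have hnorm : ‖q.coeff n‖ = ‖p.coeff (n + 1)‖ * (n + 1) := by
      rw [hcoeff, nsmul_eq_mul, norm_mul, Complex.norm_natCast, Nat.cast_add_one, mul_comm]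
    rw [← ofReal_norm, ← ofReal_norm, hnorm, ENNReal.ofReal_mul (norm_nonneg _), mul_assoc,
      ← ENNReal.ofReal_mul hn.le]
    gcongr
    simpa only [Nat.cast_add_one, add_assoc, one_add_one_eq_two] using
      add_one_rpow_neg_le_mul_rpow_neg hn hα'.le
  set K : ℝ := 2 * 8 ^ (α + 2) / (α + 1)
  have hK : 0 ≤ K := by positivity
  calc ∑' n : ℕ, ‖p.coeff n‖ₑ * ENNReal.ofReal (((n : ℝ) + 1) ^ (-(α + 1)))
      = ‖f 0‖ₑ + ∑' n : ℕ, ‖p.coeff (n + 1)‖ₑ *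
          ENNReal.ofReal ((((n + 1 : ℕ) : ℝ) + 1) ^ (-(α + 1))) := by
        rw [tsum_eq_zero_add' ENNReal.summable, hzero]
        simp
    _ ≤ ‖f 0‖ₑ + ∑' n : ℕ, ‖q.coeff n‖ₑ * ENNReal.ofReal (((n : ℝ) + 1) ^ (-(α + 2))) := by
        gcongr ‖f 0‖ₑ + ?_
        exact ENNReal.tsum_le_tsum hshift
    _ ≤ ENNReal.ofReal 1 * ‖f 0‖ₑ + ENNReal.ofReal K * bergmanNorm 1 α (deriv f) := by
        rw [ENNReal.ofReal_one, one_mul]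
        gcongr
        exact tsum_enorm_coeff_le_bergmanNorm hα hq
    _ ≤ ENNReal.ofReal (1 + K) * dirichletNorm 1 α f := by
        rw [dirichletNorm, ofReal_norm, mul_add]
        gcongr <;> linarith

end CoefficientEstimates

/-- For `α > -1` there is `C = C(α) > 0` such that every
`f(z) = ∑ a_n z^n` in `𝒟¹_α` satisfies `∑_n |a_n| (n+1)^{-(1+α)} ≤ C ‖f‖_{𝒟¹_α}`. -/
theorem coefficients_D1a (α : ℝ) (hα : -1 < α) :
    ∃ C > 0, ∀ (f : ℂ → ℂ) (a : ℕ → ℂ),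
      (∀ z ∈ ball (0 : ℂ) 1, HasSum (fun n : ℕ => a n * z ^ n) (f z)) →
      DifferentiableOn ℂ f (ball (0 : ℂ) 1) → dirichletNorm 1 α f < ⊤ →
      (∑' n : ℕ, ENNReal.ofReal (‖a n‖ * ((n : ℝ) + 1) ^ (-(1 + α))))
        ≤ ENNReal.ofReal C * dirichletNorm 1 α f := by
  have hα' : 0 < α + 1 := neg_lt_iff_pos_add.1 hα
  refine ⟨1 + 2 * 8 ^ (α + 2) / (α + 1), by positivity, fun f a hf _ _ => ?_⟩
  have hseries : HasFPowerSeriesOnBall f (.ofScalars ℂ a) 0 1 :=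
    hasFPowerSeriesOnBall_ofScalars_of_hasSum one_pos (by rwa [eball_one])
  convert! tsum_enorm_coeff_le_dirichletNorm hα hseries using 3 with n
  rw [FormalMultilinearSeries.coeff_ofScalars, ENNReal.ofReal_mul (norm_nonneg _), ofReal_norm,
    add_comm 1 α]
end
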